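/- arXiv:2404.13763 — 3 statements merged into one kernel-verified Lean document; each statement's English description precedes it below -/
import Mathlib

section
/- For every pair of fixed integers d ≥ 0 and k ≥ 2, as the integer b → ∞ (with b > d), b/3 − u_{k;2}(b,d) = 2(d + 1/2)²/b^{2k+2} + (2k+2)(d + 1/2)²/b^{2k+3} + O(b^{−2k−4}), the implied constant depending on d and k. -/
open Filter Asymptotics

/-- The `m`-th moment of the Irwin measure:
`u_{k;m}(b,d) = ∑_{l≥0} b^{-l(m+1)} ∑_{n=0}^{b^l-1} [n has exactly k base-b digits d
(padded to length l)] · n^m`. -/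
noncomputable def momentU (b d k m : ℕ) : ℝ :=
  ∑' l : ℕ, ((b : ℝ) ^ (l * (m + 1)))⁻¹ *
    ∑ n ∈ Finset.range (b ^ l),
      (if ((Finset.range l).filter fun i => n / b ^ i % b = d).card = k
        then (n : ℝ) ^ m else 0)

/-!
Splitting off the leading digit maps a string `n` of length `l` to `n + b ^ l * a`, which turns the
defining series into a linear recurrence expressing `u_{k;m}` through the `u_{k;j}` and
`u_{k-1;j}` with `j ≤ m`. Solving it gives `u_{k;0} = b` and
`b / 2 - u_{k;1} = b (d + 1/2) / (b² - b + 1) ^ (k + 1)`, and for `m = 2` the defects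
`ε k = b / 3 - u_{k;2}` satisfy
`(b³ - b + 1) ε (k + 1) = ε k + 2 (d + 1/2)² b² (b - 1) / (b² - b + 1) ^ (k + 2)`.
Hence `ε k = t ^ (2 k + 2) R k t` at `t = 1 / b`, where `R k` is a rational function, analytic at
`0`, with `R (k + 1) 0 = 2 (d + 1/2)²` and `R (k + 1)' 0 = R k 0 + 2 (k + 1) (d + 1/2)²`, so that
`R k' 0 = (2 k + 2) (d + 1/2)²` for `k ≥ 2`. The expansion is the first-order Taylor formula for
`R k` at `0`.
-/

section General

lemma sum_range_mul_eq_sum_sum {M : Type*} [AddCommMonoid M] (f : ℕ → M) (m n : ℕ) :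
    ∑ i ∈ Finset.range (m * n), f i =
      ∑ a ∈ Finset.range n, ∑ i ∈ Finset.range m, f (i + m * a) := by
  induction n with
  | zero => simp
  | succ n ih =>
    rw [Finset.sum_range_succ, ← ih, Nat.mul_succ, Finset.sum_range_add]
    simp only [add_comm]

lemma sum_range_cast {K : Type*} [Field K] [CharZero K] (n : ℕ) :
    ∑ a ∈ Finset.range n, (a : K) = n * (n - 1) / 2 := by
  induction n with
  | zero => simp
  | succ n ih => rw [Finset.sum_range_succ, ih]; push_cast; ring

lemma sum_range_cast_sq {K : Type*} [Field K] [CharZero K] (n : ℕ) :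
    ∑ a ∈ Finset.range n, (a : K) ^ 2 = n * (n - 1) * (2 * n - 1) / 6 := by
  induction n with
  | zero => simp
  | succ n ih => rw [Finset.sum_range_succ, ih]; push_cast; ring

lemma summable_of_succ_le_mul_add {x y : ℕ → ℝ} {r : ℝ} (hr : r < 1) (hx : ∀ n, 0 ≤ x n)
    (hy : ∀ n, 0 ≤ y n) (hy_sum : Summable y) (h : ∀ n, x (n + 1) ≤ r * x n + y n) :
    Summable x := by
  refine summable_of_sum_range_le (c := (x 0 + ∑' n, y n) / (1 - r)) hx fun N => ?_
  rw [le_div_iff₀ (sub_pos.2 hr)]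
  have h_succ : ∑ n ∈ Finset.range N, x (n + 1) ≤
      r * ∑ n ∈ Finset.range N, x n + ∑ n ∈ Finset.range N, y n := by
    rw [Finset.mul_sum, ← Finset.sum_add_distrib]
    exact Finset.sum_le_sum fun n _ => h n
  have h_shift : ∑ n ∈ Finset.range N, x n ≤ ∑ n ∈ Finset.range N, x (n + 1) + x 0 := by
    rw [← Finset.sum_range_succ', Finset.sum_range_succ]
    exact le_add_of_nonneg_right (hx N)
  have h_tsum := hy_sum.sum_le_tsum (Finset.range N) fun n _ => hy n
  linarith

lemma isBigO_sub_affine_of_analyticAt {𝕜 F : Type*} [NontriviallyNormedField 𝕜]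
    [NormedAddCommGroup F] [NormedSpace 𝕜 F] {f : 𝕜 → F} {f' : F} {x : 𝕜}
    (hf : AnalyticAt 𝕜 f x) (hf' : HasDerivAt f f' x) :
    (fun h => f (x + h) - (f x + h • f')) =O[nhds 0] fun h => h ^ 2 := by
  obtain ⟨p, hp⟩ := hf
  have h_partialSum : ∀ h, p.partialSum 2 h = f x + h • f' := fun h => by
    rw [FormalMultilinearSeries.partialSum, Finset.sum_range_succ, Finset.sum_range_one,
      p.apply_eq_pow_smul_coeff, p.apply_eq_pow_smul_coeff, pow_zero, one_smul, pow_one,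
      show p.coeff 0 = f x from hp.coeff_zero _, show p.coeff 1 = f' from hp.hasDerivAt.unique hf']
  simpa only [h_partialSum, ← norm_pow, isBigO_norm_right] using hp.isBigO_sub_partialSum_pow 2

end General

section Digits

/-- The number of occurrences of the digit `d` among the `l` lowest base-`b` digits of `n`, leading
zeros included. -/
def digitCount (b d l n : ℕ) : ℕ :=
  ((Finset.range l).filter fun i => n / b ^ i % b = d).card

variable {b : ℕ}

lemma digitCount_add_pow_mul (d : ℕ) {l a n : ℕ} (ha : a < b) (hn : n < b ^ l) :
    digitCount b d (l + 1) (n + b ^ l * a) = digitCount b d l n + if a = d then 1 else 0 := by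
  have hb : 0 < b := a.zero_le.trans_lt ha
  have h_top : (n + b ^ l * a) / b ^ l % b = a := by
    rw [Nat.add_mul_div_left _ _ (by positivity), Nat.div_eq_of_lt hn, zero_add,
      Nat.mod_eq_of_lt ha]
  have h_low : ∀ i < l, (n + b ^ l * a) / b ^ i % b = n / b ^ i % b := fun i hi => by
    obtain ⟨j, rfl⟩ := Nat.exists_eq_add_of_lt hi
    rw [show b ^ (i + j + 1) * a = b ^ i * (b * (b ^ j * a)) by ring,
      Nat.add_mul_div_left _ _ (by positivity), Nat.add_mul_mod_self_left]
  simp only [digitCount, Finset.card_filter, Finset.sum_range_succ, h_top]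
  congr 1
  exact Finset.sum_congr rfl fun i hi => by rw [h_low i (Finset.mem_range.1 hi)]

lemma sum_digitCount_succ {M : Type*} [AddCommMonoid M] (d l : ℕ) (F : ℕ → ℕ → M) :
    ∑ n ∈ Finset.range (b ^ (l + 1)), F (digitCount b d (l + 1) n) n =
      ∑ a ∈ Finset.range b, ∑ n ∈ Finset.range (b ^ l),
        F (digitCount b d l n + if a = d then 1 else 0) (n + b ^ l * a) := by
  rw [pow_succ, sum_range_mul_eq_sum_sum]
  refine Finset.sum_congr rfl fun a ha => Finset.sum_congr rfl fun n hn => ?_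
  rw [digitCount_add_pow_mul d (Finset.mem_range.1 ha) (Finset.mem_range.1 hn)]

end Digits

section LevelMoment

/-- The contribution of the strings of length `l` to the `m`-th moment, with a string that has `c`
digits `d` weighted by `w c`. General weights, rather than the indicator `Pi.single k 1` of
`c = k`, keep the recurrence in `l` uniform: prepending the digit `d` shifts `w`, and the shift of
`Pi.single 0 1` is `0`. -/
noncomputable def levelMoment (b d : ℕ) (w : ℕ → ℝ) (m l : ℕ) : ℝ :=
  ((b : ℝ) ^ (l * (m + 1)))⁻¹ *
    ∑ n ∈ Finset.range (b ^ l), w (digitCount b d l n) * (n : ℝ) ^ m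

variable {b d : ℕ}

lemma momentU_eq_tsum_levelMoment (b d k m : ℕ) :
    momentU b d k m = ∑' l, levelMoment b d (Pi.single k 1) m l := by
  simp only [momentU, levelMoment, digitCount, Pi.single_apply, ite_mul, one_mul, zero_mul]

lemma levelMoment_length_zero (b d : ℕ) (w : ℕ → ℝ) (m : ℕ) :
    levelMoment b d w m 0 = w 0 * 0 ^ m := by
  simp [levelMoment, digitCount]

lemma levelMoment_single_zero_shift (b d : ℕ) :
    levelMoment b d (fun c => (Pi.single 0 1 : ℕ → ℝ) (c + 1)) = 0 := by
  ext m l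
  simp [levelMoment]

lemma levelMoment_single_succ_shift (b d k : ℕ) :
    levelMoment b d (fun c => (Pi.single (k + 1) 1 : ℕ → ℝ) (c + 1)) =
      levelMoment b d (Pi.single k 1) := by
  ext m l
  simp [levelMoment, Pi.single_apply]

lemma levelMoment_nonneg {w : ℕ → ℝ} (hw : ∀ c, 0 ≤ w c) (m l : ℕ) :
    0 ≤ levelMoment b d w m l :=
  mul_nonneg (by positivity) (Finset.sum_nonneg fun n _ => mul_nonneg (hw _) (by positivity))

lemma levelMoment_le_order_zero (hb : b ≠ 0) {w : ℕ → ℝ} (hw : ∀ c, 0 ≤ w c) (m l : ℕ) :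
    levelMoment b d w m l ≤ levelMoment b d w 0 l := by
  have h_term : ∀ n ∈ Finset.range (b ^ l), w (digitCount b d l n) * (n : ℝ) ^ m ≤
      ((b : ℝ) ^ l) ^ m * (w (digitCount b d l n) * (n : ℝ) ^ 0) := fun n hn => by
    have hn' : (n : ℝ) ≤ (b : ℝ) ^ l := mod_cast (Finset.mem_range.1 hn).le
    rw [pow_zero, mul_one, mul_comm]
    gcongr
    exact hw _
  calc levelMoment b d w m l
      ≤ ((b : ℝ) ^ (l * (m + 1)))⁻¹ * ∑ n ∈ Finset.range (b ^ l),
          ((b : ℝ) ^ l) ^ m * (w (digitCount b d l n) * (n : ℝ) ^ 0) := by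
        unfold levelMoment
        exact mul_le_mul_of_nonneg_left (Finset.sum_le_sum h_term) (by positivity)
    _ = levelMoment b d w 0 l := by
        rw [← Finset.mul_sum, levelMoment, pow_mul, pow_mul, pow_succ, zero_add, pow_one]
        field_simp

lemma levelMoment_succ_eq_sum_digit (hb : b ≠ 0) (w : ℕ → ℝ) (m l : ℕ) :
    (b : ℝ) ^ (m + 1) * levelMoment b d w m (l + 1) =
      ∑ a ∈ Finset.range b, ∑ j ∈ Finset.range (m + 1), m.choose j * (a : ℝ) ^ (m - j) *
        levelMoment b d (fun c => w (c + if a = d then 1 else 0)) j l := by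
  have h_scale : (b : ℝ) ^ (m + 1) * ((b : ℝ) ^ ((l + 1) * (m + 1)))⁻¹ =
      ((b : ℝ) ^ (l * (m + 1)))⁻¹ := by
    rw [add_one_mul l, pow_add _ (l * _)]
    field_simp
  rw [levelMoment, sum_digitCount_succ d l fun c n => w c * (n : ℝ) ^ m, ← mul_assoc, h_scale,
    Finset.mul_sum]
  refine Finset.sum_congr rfl fun a _ => ?_
  simp only [levelMoment, Finset.mul_sum]
  rw [Finset.sum_comm]
  refine Finset.sum_congr rfl fun n _ => ?_
  push_cast
  rw [add_pow, Finset.mul_sum, Finset.mul_sum]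
  refine Finset.sum_congr rfl fun j hj => ?_
  obtain ⟨i, rfl⟩ := Nat.exists_eq_add_of_le (Finset.mem_range_succ_iff.1 hj)
  rw [Nat.add_sub_cancel_left, mul_pow, ← pow_mul,
    show l * (j + i + 1) = l * (j + 1) + l * i by ring, pow_add]
  field_simp

lemma levelMoment_succ (hd : d < b) (w : ℕ → ℝ) (m l : ℕ) :
    (b : ℝ) ^ (m + 1) * levelMoment b d w m (l + 1) =
      ∑ j ∈ Finset.range (m + 1), m.choose j *
        ((∑ a ∈ Finset.range b, (a : ℝ) ^ (m - j) - (d : ℝ) ^ (m - j)) * levelMoment b d w j l +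
          (d : ℝ) ^ (m - j) * levelMoment b d (fun c => w (c + 1)) j l) := by
  rw [levelMoment_succ_eq_sum_digit (by omega), Finset.sum_comm]
  refine Finset.sum_congr rfl fun j _ => ?_
  have h_digit : ∀ a : ℕ, levelMoment b d (fun c => w (c + if a = d then 1 else 0)) j l =
      levelMoment b d w j l +
        if a = d then levelMoment b d (fun c => w (c + 1)) j l - levelMoment b d w j l else 0 :=
    fun a => by split_ifs <;> simp
  simp only [h_digit, mul_add, mul_ite, mul_zero, Finset.sum_add_distrib, Finset.sum_ite_eq',
    Finset.mem_range, hd, if_true, ← Finset.sum_mul, ← Finset.mul_sum]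
  ring

lemma summable_levelMoment_order_zero_of_shift (hd : d < b) {w : ℕ → ℝ} (hw : ∀ c, 0 ≤ w c)
    (h : Summable (levelMoment b d (fun c => w (c + 1)) 0)) : Summable (levelMoment b d w 0) := by
  have hb : (0 : ℝ) < b := mod_cast d.zero_le.trans_lt hd
  refine summable_of_succ_le_mul_add (r := 1 - (b : ℝ)⁻¹)
    (y := fun l => (b : ℝ)⁻¹ * levelMoment b d (fun c => w (c + 1)) 0 l)
    (by linarith [inv_pos.2 hb]) (levelMoment_nonneg hw 0)
    (fun l => mul_nonneg (by positivity) (levelMoment_nonneg (fun c => hw _) 0 l))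
    (h.mul_left _) fun l => le_of_eq ?_
  have h_succ : b * levelMoment b d w 0 (l + 1) =
      (b - 1) * levelMoment b d w 0 l + levelMoment b d (fun c => w (c + 1)) 0 l := by
    simpa using levelMoment_succ hd w 0 l
  field_simp
  linarith

lemma summable_levelMoment_single (hd : d < b) (k m : ℕ) :
    Summable (levelMoment b d (Pi.single k 1) m) := by
  have h_nonneg : ∀ k c, (0 : ℝ) ≤ (Pi.single k 1 : ℕ → ℝ) c := fun k =>
    (Pi.single_nonneg (α := fun _ : ℕ => ℝ)).2 zero_le_one
  have h_zero : Summable (levelMoment b d (Pi.single k 1) 0) := by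
    induction k with
    | zero =>
      refine summable_levelMoment_order_zero_of_shift hd (h_nonneg 0) ?_
      rw [levelMoment_single_zero_shift]
      exact summable_zero
    | succ k ih =>
      refine summable_levelMoment_order_zero_of_shift hd (h_nonneg (k + 1)) ?_
      rwa [levelMoment_single_succ_shift]
  exact .of_nonneg_of_le (levelMoment_nonneg (h_nonneg k) m)
    (levelMoment_le_order_zero (by omega) (h_nonneg k) m) h_zero

lemma hasSum_levelMoment_single (hd : d < b) (k m : ℕ) :
    HasSum (levelMoment b d (Pi.single k 1) m) (momentU b d k m) := by
  rw [momentU_eq_tsum_levelMoment]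
  exact (summable_levelMoment_single hd k m).hasSum

lemma hasSum_levelMoment_recurrence (hd : d < b) {w : ℕ → ℝ} {u v : ℕ → ℝ}
    (hu : ∀ j, HasSum (levelMoment b d w j) (u j))
    (hv : ∀ j, HasSum (levelMoment b d (fun c => w (c + 1)) j) (v j)) (m : ℕ) :
    (b : ℝ) ^ (m + 1) * u m = (b : ℝ) ^ (m + 1) * (w 0 * 0 ^ m) +
      ∑ j ∈ Finset.range (m + 1), m.choose j *
        ((∑ a ∈ Finset.range b, (a : ℝ) ^ (m - j) - (d : ℝ) ^ (m - j)) * u j +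
          (d : ℝ) ^ (m - j) * v j) := by
  have h_tail : HasSum (fun l => (b : ℝ) ^ (m + 1) * levelMoment b d w m (l + 1))
      (∑ j ∈ Finset.range (m + 1), m.choose j *
        ((∑ a ∈ Finset.range b, (a : ℝ) ^ (m - j) - (d : ℝ) ^ (m - j)) * u j +
          (d : ℝ) ^ (m - j) * v j)) := by
    simp only [levelMoment_succ hd]
    exact hasSum_sum fun j _ => (((hu j).mul_left _).add ((hv j).mul_left _)).mul_left _
  rw [← levelMoment_length_zero b d]
  exact ((hu m).mul_left _).unique h_tail.zero_add

end LevelMoment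

section Moments

variable {b d : ℕ}

lemma momentU_count_zero_recurrence (hd : d < b) (m : ℕ) :
    (b : ℝ) ^ (m + 1) * momentU b d 0 m = (b : ℝ) ^ (m + 1) * 0 ^ m +
      ∑ j ∈ Finset.range (m + 1), m.choose j *
        ((∑ a ∈ Finset.range b, (a : ℝ) ^ (m - j) - (d : ℝ) ^ (m - j)) * momentU b d 0 j) := by
  have h_shift : ∀ j, HasSum
      (levelMoment b d (fun c => (Pi.single 0 1 : ℕ → ℝ) (c + 1)) j) 0 := fun j => by
    rw [levelMoment_single_zero_shift]
    exact hasSum_zero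
  simpa using hasSum_levelMoment_recurrence hd (hasSum_levelMoment_single hd 0) h_shift m

lemma momentU_count_succ_recurrence (hd : d < b) (k m : ℕ) :
    (b : ℝ) ^ (m + 1) * momentU b d (k + 1) m =
      ∑ j ∈ Finset.range (m + 1), m.choose j *
        ((∑ a ∈ Finset.range b, (a : ℝ) ^ (m - j) - (d : ℝ) ^ (m - j)) * momentU b d (k + 1) j +
          (d : ℝ) ^ (m - j) * momentU b d k j) := by
  have h_shift : ∀ j, HasSum
      (levelMoment b d (fun c => (Pi.single (k + 1) 1 : ℕ → ℝ) (c + 1)) j) (momentU b d k j) :=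
    fun j => by
      rw [levelMoment_single_succ_shift]
      exact hasSum_levelMoment_single hd k j
  simpa using hasSum_levelMoment_recurrence hd (hasSum_levelMoment_single hd (k + 1)) h_shift m

lemma momentU_order_zero (hd : d < b) (k : ℕ) : momentU b d k 0 = b := by
  induction k with
  | zero =>
    have h_rec : b * momentU b d 0 0 = b + (b - 1) * momentU b d 0 0 := by
      simpa using momentU_count_zero_recurrence hd 0
    linarith
  | succ k ih =>
    have h_rec : b * momentU b d (k + 1) 0 = (b - 1) * momentU b d (k + 1) 0 + b := by
      simpa [ih] using momentU_count_succ_recurrence hd k 0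
    linarith

lemma mul_half_sub_momentU_one_count_zero (hd : d < b) :
    ((b : ℝ) ^ 2 - b + 1) * (b / 2 - momentU b d 0 1) = b * (d + 1 / 2) := by
  have h_rec : (b : ℝ) ^ 2 * momentU b d 0 1 =
      (b * (b - 1) / 2 - d) * b + (b - 1) * momentU b d 0 1 := by
    simpa [Finset.sum_range_succ _ 1, momentU_order_zero hd, sum_range_cast]
      using momentU_count_zero_recurrence hd 1
  linear_combination -h_rec

lemma mul_half_sub_momentU_one_count_succ (hd : d < b) (k : ℕ) :
    ((b : ℝ) ^ 2 - b + 1) * (b / 2 - momentU b d (k + 1) 1) = b / 2 - momentU b d k 1 := by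
  have h_rec : (b : ℝ) ^ 2 * momentU b d (k + 1) 1 =
      (b * (b - 1) / 2 - d) * b + d * b +
        ((b - 1) * momentU b d (k + 1) 1 + momentU b d k 1) := by
    simpa [Finset.sum_range_succ _ 1, momentU_order_zero hd, sum_range_cast]
      using momentU_count_succ_recurrence hd k 1
  linear_combination -h_rec

lemma half_sub_momentU_one (hd : d < b) (k : ℕ) :
    b / 2 - momentU b d k 1 = b * (d + 1 / 2) / ((b : ℝ) ^ 2 - b + 1) ^ (k + 1) := by
  have h_ne : (b : ℝ) ^ 2 - b + 1 ≠ 0 := by nlinarith [sq_nonneg ((b : ℝ) - 1 / 2)]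
  induction k with
  | zero =>
    rw [zero_add, pow_one, eq_div_iff h_ne, mul_comm, mul_half_sub_momentU_one_count_zero hd]
  | succ k ih =>
    rw [pow_succ, ← div_div, ← ih, eq_div_iff h_ne, mul_comm,
      mul_half_sub_momentU_one_count_succ hd]

lemma mul_third_sub_momentU_two_count_zero (hd : d < b) :
    ((b : ℝ) ^ 3 - b + 1) * (b / 3 - momentU b d 0 2) =
      (b ^ 2 - b - 2 * d) * (b / 2 - momentU b d 0 1) + b * (d + d ^ 2 + 1 / 3) := by
  have h_rec : (b : ℝ) ^ 3 * momentU b d 0 2 =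
      (b * (b - 1) * (2 * b - 1) / 6 - d ^ 2) * b +
        2 * ((b * (b - 1) / 2 - d) * momentU b d 0 1) + (b - 1) * momentU b d 0 2 := by
    simpa [Finset.sum_range_succ _ 1, Finset.sum_range_succ _ 2, momentU_order_zero hd,
      sum_range_cast, sum_range_cast_sq] using momentU_count_zero_recurrence hd 2
  linear_combination -h_rec

lemma mul_third_sub_momentU_two_count_succ (hd : d < b) (k : ℕ) :
    ((b : ℝ) ^ 3 - b + 1) * (b / 3 - momentU b d (k + 1) 2) =
      b / 3 - momentU b d k 2 +
        (b ^ 2 - b) * (2 * d + 1) * (b / 2 - momentU b d (k + 1) 1) := by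
  have h_rec : (b : ℝ) ^ 3 * momentU b d (k + 1) 2 =
      (b * (b - 1) * (2 * b - 1) / 6 - d ^ 2) * b + d ^ 2 * b +
        2 * ((b * (b - 1) / 2 - d) * momentU b d (k + 1) 1 + d * momentU b d k 1) +
        ((b - 1) * momentU b d (k + 1) 2 + momentU b d k 2) := by
    simpa [Finset.sum_range_succ _ 1, Finset.sum_range_succ _ 2, momentU_order_zero hd,
      sum_range_cast, sum_range_cast_sq] using momentU_count_succ_recurrence hd k 2
  linear_combination -h_rec - 2 * (d : ℝ) * mul_half_sub_momentU_one_count_succ hd k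

end Moments

section Expansion

/-- The rational function `R k` with `b / 3 - u_{k;2} = R k t / b ^ (2 * k + 2)` at `t = 1 / b`; the
denominators are `b ^ 3 - b + 1` and `b ^ 2 - b + 1` written in terms of `t`. -/
noncomputable def scaledDefect (d : ℝ) : ℕ → ℝ → ℝ
  | 0 => fun t => ((1 - t - 2 * d * t ^ 2) * (d + 1 / 2) / (1 - t + t ^ 2) + (d + d ^ 2 + 1 / 3)) /
      (1 - t ^ 2 + t ^ 3)
  | k + 1 => fun t => (t * scaledDefect d k t +
      2 * (d + 1 / 2) ^ 2 * (1 - t) / (1 - t + t ^ 2) ^ (k + 2)) / (1 - t ^ 2 + t ^ 3)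

lemma third_sub_momentU_two {b d : ℕ} (hd : d < b) (k : ℕ) :
    (b : ℝ) / 3 - momentU b d k 2 = scaledDefect d k (b : ℝ)⁻¹ / (b : ℝ) ^ (2 * k + 2) := by
  have hb : (1 : ℝ) ≤ b := mod_cast Nat.one_le_of_lt hd
  have hb' : (b : ℝ) ≠ 0 := by positivity
  have h_quad : (b : ℝ) ^ 2 - b + 1 ≠ 0 := by nlinarith
  have h_cubic : (b : ℝ) ^ 3 - b + 1 ≠ 0 := by nlinarith [le_self_pow₀ hb (n := 3) (by simp)]
  have h_quad_inv : 1 - (b : ℝ)⁻¹ + (b : ℝ)⁻¹ ^ 2 = (b ^ 2 - b + 1) / b ^ 2 := by field_simp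
  have h_cubic_inv : 1 - (b : ℝ)⁻¹ ^ 2 + (b : ℝ)⁻¹ ^ 3 = (b ^ 3 - b + 1) / b ^ 3 := by field_simp
  induction k with
  | zero =>
    apply mul_left_cancel₀ h_cubic
    rw [mul_third_sub_momentU_two_count_zero hd, half_sub_momentU_one hd]
    simp only [scaledDefect, h_quad_inv, h_cubic_inv]
    generalize (b : ℝ) ^ 2 - b + 1 = q at *
    generalize (b : ℝ) ^ 3 - b + 1 = p at *
    field_simp
    ring
  | succ k ih =>
    apply mul_left_cancel₀ h_cubic
    rw [mul_third_sub_momentU_two_count_succ hd, ih, half_sub_momentU_one hd]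
    simp only [scaledDefect, h_quad_inv, h_cubic_inv, div_pow]
    generalize (b : ℝ) ^ 2 - b + 1 = q at *
    generalize (b : ℝ) ^ 3 - b + 1 = p at *
    field_simp
    ring

lemma analyticAt_scaledDefect (d : ℝ) (k : ℕ) : AnalyticAt ℝ (scaledDefect d k) 0 := by
  induction k with
  | zero =>
    unfold scaledDefect
    fun_prop (disch := norm_num)
  | succ k ih =>
    unfold scaledDefect
    fun_prop (disch := norm_num)

lemma scaledDefect_succ_zero (d : ℝ) (k : ℕ) :
    scaledDefect d (k + 1) 0 = 2 * (d + 1 / 2) ^ 2 := by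
  simp [scaledDefect]

lemma hasDerivAt_scaledDefect_succ (d : ℝ) (k : ℕ) :
    HasDerivAt (scaledDefect d (k + 1))
      (scaledDefect d k 0 + 2 * (k + 1) * (d + 1 / 2) ^ 2) 0 := by
  have h_id := hasDerivAt_id' (0 : ℝ)
  have h_prev := (analyticAt_scaledDefect d k).differentiableAt.hasDerivAt
  have h_quad : HasDerivAt (fun t : ℝ => 1 - t + t ^ 2) (-1) 0 := by
    simpa using (h_id.const_sub 1).fun_add (h_id.fun_pow 2)
  have h_cubic : HasDerivAt (fun t : ℝ => 1 - t ^ 2 + t ^ 3) 0 0 := by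
    simpa using ((h_id.fun_pow 2).const_sub 1).fun_add (h_id.fun_pow 3)
  have h_source : HasDerivAt
      (fun t : ℝ => 2 * (d + 1 / 2) ^ 2 * (1 - t) / (1 - t + t ^ 2) ^ (k + 2))
      (2 * (k + 1) * (d + 1 / 2) ^ 2) 0 := by
    refine (((h_id.const_sub 1).const_mul _).fun_div (h_quad.fun_pow (k + 2))
      (by simp)).congr_deriv ?_
    simp only [sub_zero, zero_pow two_ne_zero, add_zero, one_pow, div_one]
    push_cast
    ring
  rw [scaledDefect]
  exact (((h_id.fun_mul h_prev).fun_add h_source).fun_div h_cubic (by simp)).congr_deriv (by simp)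

end Expansion

theorem momentU_two_asymptotic (d k : ℕ) (hk : 2 ≤ k) :
    (fun b : ℕ => (b : ℝ) / 3 - momentU b d k 2 -
      (2 * ((d : ℝ) + 1 / 2) ^ 2 / (b : ℝ) ^ (2 * k + 2)
        + (2 * (k : ℝ) + 2) * ((d : ℝ) + 1 / 2) ^ 2 / (b : ℝ) ^ (2 * k + 3)))
      =O[atTop] fun b : ℕ => ((b : ℝ) ^ (2 * k + 4))⁻¹ := by
  obtain ⟨j, rfl⟩ : ∃ j, k = j + 2 := ⟨k - 2, by omega⟩
  have h_deriv := hasDerivAt_scaledDefect_succ d (j + 1)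
  rw [scaledDefect_succ_zero] at h_deriv
  have h_taylor := (isBigO_sub_affine_of_analyticAt (analyticAt_scaledDefect d (j + 2))
    h_deriv).comp_tendsto (tendsto_inv_atTop_nhds_zero_nat (𝕜 := ℝ))
  have h_scaled :=
    (isBigO_refl (fun b : ℕ => ((b : ℝ) ^ (2 * (j + 2) + 2))⁻¹) atTop).mul h_taylor
  refine h_scaled.congr' ?_ (.of_eq <| funext fun b => ?_)
  · filter_upwards [eventually_gt_atTop d] with b hb
    rw [third_sub_momentU_two hb]
    simp only [Function.comp_apply, zero_add, scaledDefect_succ_zero, smul_eq_mul]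
    push_cast
    ring
  · rw [Function.comp_apply, inv_pow, ← mul_inv, ← pow_add]
end

section
/- For every pair of fixed integers d ≥ 0 and m ≥ 1, as the integer b → ∞ (with b > d), the complementary moment satisfies v_{0;m}(b,d) = b/(m+1) + (d + 1/2)m/b − ((d² + d + 1/3)·m(m−1)/2 − (d + 1/2))/b² + O(b⁻³), the implied constant depending on d and m. -/
open Filter Asymptotics

/-- The `m`-th complementary moment of the Irwin measure:
`v_{k;m}(b,d) = ∑_{l≥0} b^{-l(m+1)} ∑_{n=0}^{b^l-1} [n has exactly k base-b digits d
(padded to length l)] · (b^l - n)^m`. -/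
noncomputable def momentV (b d k m : ℕ) : ℝ :=
  ∑' l : ℕ, ((b : ℝ) ^ (l * (m + 1)))⁻¹ *
    ∑ n ∈ Finset.range (b ^ l),
      (if ((Finset.range l).filter fun i => n / b ^ i % b = d).card = k
        then ((b : ℝ) ^ l - n) ^ m else 0)

/-!
In the variable `y = 1 - x` the `m`-th moment is `L (X ^ m)`, where `L` integrates polynomials
against the Irwin measure. Writing `U` for the transfer operator of all base-`b` expansions and
`φ` for the inverse branch of the excluded digit `d`, self-similarity of the measure reads
`L p = p(1) + L (U p) - b⁻¹ L (p ∘ φ)`.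

By Raabe's multiplication theorem the Bernoulli polynomial `Bₖ` is an eigenvector of `U` with
eigenvalue `b⁻ᵏ`. Since `φ` is within `O(b⁻¹)` of the constant `1`, this forces
`L Bₖ = O(b⁻¹)` for `k ≥ 1`, so that `b⁻¹ L` is Lebesgue integration on `[0, 1]` up to `O(b⁻²)`.
Inserting this into the Taylor expansion of `p ∘ φ` at `1` gives the expansion of `L p` for every
polynomial `p`.
-/

section

open Polynomial

open scoped Finset

lemma exists_abs_eval_le_on_Icc (p : ℝ[X]) (a b : ℝ) :
    ∃ C, ∀ y ∈ Set.Icc a b, |p.eval y| ≤ C :=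
  isCompact_Icc.exists_bound_of_continuousOn p.continuous.continuousOn

lemma eval_one_derivative_X_pow {R : Type*} [CommSemiring R] (m : ℕ) :
    (derivative (X ^ m : R[X])).eval 1 = m := by
  simp only [derivative_X_pow, eval_C_mul, eval_pow, eval_X, one_pow, mul_one]

lemma eval_one_derivative_derivative_X_pow {R : Type*} [CommRing R] (m : ℕ) :
    (derivative (derivative (X ^ m : R[X]))).eval 1 = m * (m - 1) := by
  rw [derivative_X_pow, derivative_C_mul, eval_C_mul, eval_one_derivative_X_pow]
  rcases m with _ | m <;> simp

lemma two_mul_taylor_coeff_two {R : Type*} [CommSemiring R] (r : R) (p : R[X]) :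
    2 * (taylor r p).coeff 2 = (derivative (derivative p)).eval r := by
  rw [taylor_coeff]
  simpa using congrArg (eval r) (congrFun (factorial_smul_hasseDeriv (R := R) 2) p)

/-- The Bernoulli polynomial `Bₖ` with real coefficients. -/
noncomputable def realBernoulli (k : ℕ) : ℝ[X] :=
  (Polynomial.bernoulli k).map (algebraMap ℚ ℝ)

lemma eval_realBernoulli (k : ℕ) (x : ℝ) : (realBernoulli k).eval x = bernoulliFun k x := rfl

lemma realBernoulli_zero : realBernoulli 0 = 1 := by
  simp only [realBernoulli, Polynomial.bernoulli_zero, Polynomial.map_one]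

lemma realBernoulli_one : realBernoulli 1 = X - C 2⁻¹ := by
  simp [realBernoulli, Polynomial.bernoulli_one]

lemma sum_choose_smul_realBernoulli (n : ℕ) :
    ∑ k ∈ Finset.range (n + 1), ((n + 1).choose k : ℝ) • realBernoulli k =
      monomial n (n + 1 : ℝ) := by
  have h := congrArg (Polynomial.map (algebraMap ℚ ℝ)) (Polynomial.sum_bernoulli n)
  simpa only [realBernoulli, Polynomial.map_sum, Polynomial.map_smul, Polynomial.map_add,
    map_monomial, map_natCast, map_add, map_one] using h

lemma span_range_realBernoulli : Submodule.span ℝ (Set.range realBernoulli) = ⊤ := by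
  refine eq_top_iff.mpr fun p _ => ?_
  induction p using Polynomial.induction_on' with
  | add p q hp hq => exact add_mem (hp trivial) (hq trivial)
  | monomial n a =>
    have hn : (n : ℝ) + 1 ≠ 0 := by positivity
    have h : monomial n a = (a / (n + 1)) •
        ∑ k ∈ Finset.range (n + 1), ((n + 1).choose k : ℝ) • realBernoulli k := by
      rw [sum_choose_smul_realBernoulli, smul_monomial, smul_eq_mul, div_mul_cancel₀ _ hn]
    rw [h]
    exact Submodule.smul_mem _ _ <| Submodule.sum_mem _ fun k _ =>
      Submodule.smul_mem _ _ <| Submodule.subset_span ⟨k, rfl⟩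

lemma isBigO_of_realBernoulli {α : Type*} {l : Filter α} {g : α → ℝ} (Φ : α → ℝ[X] →ₗ[ℝ] ℝ)
    (h : ∀ k, (fun a => Φ a (realBernoulli k)) =O[l] g) (p : ℝ[X]) :
    (fun a => Φ a p) =O[l] g := by
  have hp : p ∈ Submodule.span ℝ (Set.range realBernoulli) :=
    span_range_realBernoulli ▸ Submodule.mem_top
  induction hp using Submodule.span_induction with
  | mem p hp => obtain ⟨k, rfl⟩ := hp; exact h k
  | zero => simpa only [map_zero] using isBigO_zero g l
  | add p q _ _ hp hq => simpa only [map_add] using hp.add hq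
  | smul c p _ hp => simpa only [map_smul, smul_eq_mul] using hp.const_mul_left c

/-- The functional `p ↦ ∫₀¹ p` on real polynomials. -/
noncomputable def unitIntegral : ℝ[X] →ₗ[ℝ] ℝ where
  toFun p := ∫ x in (0 : ℝ)..1, p.eval x
  map_add' p q := by
    simp only [eval_add]
    exact intervalIntegral.integral_add (p.continuous.intervalIntegrable _ _)
      (q.continuous.intervalIntegrable _ _)
  map_smul' c p := by
    simp only [eval_smul, smul_eq_mul, RingHom.id_apply, intervalIntegral.integral_const_mul]

lemma unitIntegral_apply (p : ℝ[X]) : unitIntegral p = ∫ x in (0 : ℝ)..1, p.eval x := rfl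

lemma unitIntegral_realBernoulli (k : ℕ) :
    unitIntegral (realBernoulli k) = if k = 0 then 1 else 0 :=
  integral_bernoulliFun k

lemma unitIntegral_X_pow (m : ℕ) : unitIntegral (X ^ m) = 1 / (m + 1) := by
  simp [unitIntegral_apply]

lemma unitIntegral_const_sub_X_pow (c : ℝ) (m : ℕ) :
    unitIntegral ((C c - X) ^ m) = (c ^ (m + 1) - (c - 1) ^ (m + 1)) / (m + 1) := by
  simp only [unitIntegral_apply, eval_pow, eval_sub, eval_C, eval_X]
  rw [intervalIntegral.integral_comp_sub_left (fun x => x ^ m), integral_pow, sub_zero]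

/-- The inverse branch `y ↦ 1 - (a + 1 - y) / b`, as a polynomial. In the complementary variable
`y = 1 - x` it prepends the base-`b` digit `a`, that is, it is `x ↦ (a + x) / b`. -/
noncomputable def digitBranch (b a : ℕ) : ℝ[X] := 1 - C (b : ℝ)⁻¹ * (C (a + 1 : ℝ) - X)

lemma eval_digitBranch (b a : ℕ) (y : ℝ) :
    (digitBranch b a).eval y = 1 - (b : ℝ)⁻¹ * (a + 1 - y) := by
  simp [digitBranch]

lemma eval_digitBranch_mem_Icc {b a : ℕ} (ha : a < b) {y : ℝ} (hy : y ∈ Set.Icc (0 : ℝ) 1) :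
    (digitBranch b a).eval y ∈ Set.Icc (0 : ℝ) 1 := by
  have hb : (0 : ℝ) < b := by exact_mod_cast ha.pos
  have hab : (a : ℝ) + 1 ≤ b := by exact_mod_cast ha
  obtain ⟨hy0, hy1⟩ := hy
  rw [eval_digitBranch, inv_mul_eq_div]
  constructor
  · rw [sub_nonneg, div_le_one hb]; linarith
  · rw [sub_le_self_iff]; exact div_nonneg (by linarith [a.cast_nonneg (α := ℝ)]) hb.le

lemma comp_digitBranch (p : ℝ[X]) (b d : ℕ) {n : ℕ} (hn : p.natDegree < n) :
    p.comp (digitBranch b d) = ∑ i ∈ Finset.range n,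
      ((taylor 1 p).coeff i * (-(b : ℝ)⁻¹) ^ i) • (C (d + 1 : ℝ) - X) ^ i := by
  have h : p.comp (digitBranch b d) =
      (taylor 1 p).comp (C (-(b : ℝ)⁻¹) * (C (d + 1 : ℝ) - X)) := by
    rw [taylor_apply, comp_assoc]
    simp [digitBranch, sub_eq_neg_add]
  rw [h, comp, eval₂_eq_sum_range' _ (by rwa [natDegree_taylor])]
  refine Finset.sum_congr rfl fun i _ => ?_
  rw [mul_pow, ← C_pow, ← mul_assoc, ← C_mul, smul_eq_C_mul]

/-- The transfer operator `p ↦ b⁻¹ ∑_{a ∈ S} p ∘ digitBranch b a` of base-`b` expansions whose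
digits lie in `S`. -/
noncomputable def digitTransfer (b : ℕ) (S : Finset ℕ) : ℝ[X] →ₗ[ℝ] ℝ[X] :=
  (b : ℝ)⁻¹ • ∑ a ∈ S, (aeval (digitBranch b a)).toLinearMap

lemma digitTransfer_apply (b : ℕ) (S : Finset ℕ) (p : ℝ[X]) :
    digitTransfer b S p = (b : ℝ)⁻¹ • ∑ a ∈ S, p.comp (digitBranch b a) := by
  simp [digitTransfer, comp_eq_aeval]

lemma eval_digitTransfer (b : ℕ) (S : Finset ℕ) (p : ℝ[X]) (y : ℝ) :
    (digitTransfer b S p).eval y =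
      (b : ℝ)⁻¹ * ∑ a ∈ S, p.eval (1 - (b : ℝ)⁻¹ * (a + 1 - y)) := by
  simp [digitTransfer_apply, eval_finsetSum, eval_digitBranch]

lemma digitTransfer_erase {S : Finset ℕ} {d : ℕ} (hd : d ∈ S) (b : ℕ) (p : ℝ[X]) :
    digitTransfer b (S.erase d) p =
      digitTransfer b S p - (b : ℝ)⁻¹ • p.comp (digitBranch b d) := by
  rw [digitTransfer_apply, digitTransfer_apply, ← Finset.add_sum_erase S _ hd, smul_add,
    add_sub_cancel_left]

lemma digitTransfer_one (b : ℕ) (S : Finset ℕ) : digitTransfer b S 1 = (#S / b : ℝ) • 1 := by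
  simp only [digitTransfer_apply, one_comp, Finset.sum_const, ← Nat.cast_smul_eq_nsmul ℝ,
    smul_smul, inv_mul_eq_div]

lemma digitTransfer_range_realBernoulli {b : ℕ} (hb : b ≠ 0) (k : ℕ) :
    digitTransfer b (Finset.range b) (realBernoulli k) = ((b : ℝ)⁻¹ ^ k) • realBernoulli k := by
  have hb0 : (b : ℝ) ≠ 0 := by exact_mod_cast hb
  refine Polynomial.funext fun y => ?_
  have hmul := bernoulliFun_mul k hb (y / b)
  rw [mul_div_cancel₀ _ hb0] at hmul
  rw [eval_digitTransfer, eval_smul, eval_realBernoulli, hmul, ← Finset.sum_range_reflect,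
    smul_eq_mul, inv_pow, ← mul_assoc]
  congr 1
  · field_simp
  · refine Finset.sum_congr rfl fun a ha => ?_
    have hab : a + 1 ≤ b := Finset.mem_range.mp ha
    rw [eval_realBernoulli, Nat.sub_sub, add_comm 1 a, Nat.cast_sub hab]
    congr 1
    push_cast
    field_simp
    ring

section DigitIntegral

variable {b : ℕ} {S : Finset ℕ}

lemma abs_eval_digitTransfer_le (hS : S ⊆ Finset.range b) {p : ℝ[X]} {C : ℝ}
    (hp : ∀ y ∈ Set.Icc (0 : ℝ) 1, |p.eval y| ≤ C) :
    ∀ y ∈ Set.Icc (0 : ℝ) 1, |(digitTransfer b S p).eval y| ≤ #S / b * C := by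
  intro y hy
  have hbranch : ∀ a ∈ S, |p.eval (1 - (b : ℝ)⁻¹ * (a + 1 - y))| ≤ C := fun a ha => by
    rw [← eval_digitBranch]
    exact hp _ (eval_digitBranch_mem_Icc (Finset.mem_range.mp (hS ha)) hy)
  calc |(digitTransfer b S p).eval y|
      = (b : ℝ)⁻¹ * |∑ a ∈ S, p.eval (1 - (b : ℝ)⁻¹ * (a + 1 - y))| := by
        rw [eval_digitTransfer, abs_mul, abs_of_nonneg (by positivity)]
    _ ≤ (b : ℝ)⁻¹ * (#S * C) := by
        gcongr
        rw [← nsmul_eq_mul]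
        exact (Finset.abs_sum_le_sum_abs _ _).trans (Finset.sum_le_card_nsmul _ _ _ hbranch)
    _ = #S / b * C := by ring

lemma abs_eval_digitTransfer_pow_le (hS : S ⊆ Finset.range b) {p : ℝ[X]} {C : ℝ}
    (hp : ∀ y ∈ Set.Icc (0 : ℝ) 1, |p.eval y| ≤ C) (l : ℕ) :
    ∀ y ∈ Set.Icc (0 : ℝ) 1, |((digitTransfer b S ^ l) p).eval y| ≤ (#S / b) ^ l * C := by
  induction l with
  | zero => simpa using hp
  | succ l ih =>
    rw [pow_succ', pow_succ', mul_assoc]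
    exact abs_eval_digitTransfer_le hS ih

lemma card_div_lt_one (hS : S ⊂ Finset.range b) : (#S / b : ℝ) < 1 := by
  have hcard : #S < b := by simpa using Finset.card_lt_card hS
  rw [div_lt_one (by exact_mod_cast hcard.pos)]
  exact_mod_cast hcard

lemma hasSum_card_div_pow_mul (hS : S ⊂ Finset.range b) (C : ℝ) :
    HasSum (fun l : ℕ => (#S / b : ℝ) ^ l * C) ((1 - (#S / b : ℝ))⁻¹ * C) :=
  (hasSum_geometric_of_lt_one (by positivity) (card_div_lt_one hS)).mul_right C

lemma summable_eval_one_digitTransfer_pow (hS : S ⊂ Finset.range b) (p : ℝ[X]) :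
    Summable fun l => ((digitTransfer b S ^ l) p).eval 1 := by
  obtain ⟨C, hC⟩ := exists_abs_eval_le_on_Icc p 0 1
  exact .of_norm_bounded (hasSum_card_div_pow_mul hS C).summable fun l =>
    abs_eval_digitTransfer_pow_le hS.subset hC l 1 (by simp)

open Classical in
/-- Integration of polynomials in the complementary variable `y = 1 - x` against the measure
that puts mass `b^{-l}` at `x = n / b^l` for every `l` and every `l`-digit string `n` in base `b`
with all digits in `S`. It is the Neumann series `(1 - digitTransfer b S)⁻¹` evaluated at `1`, and
is set to `0` unless `S` is a proper subset of the digits, since the total mass is then infinite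
or the digits are not base-`b` digits. -/
noncomputable def digitIntegral (b : ℕ) (S : Finset ℕ) : ℝ[X] →ₗ[ℝ] ℝ :=
  if hS : S ⊂ Finset.range b then
    { toFun := fun p => ∑' l, ((digitTransfer b S ^ l) p).eval 1
      map_add' := fun p q => by
        simp only [map_add, eval_add]
        exact (summable_eval_one_digitTransfer_pow hS p).tsum_add
          (summable_eval_one_digitTransfer_pow hS q)
      map_smul' := fun c p => by
        simp only [map_smul, eval_smul, smul_eq_mul, tsum_mul_left, RingHom.id_apply] }
  else 0

lemma digitIntegral_apply (hS : S ⊂ Finset.range b) (p : ℝ[X]) :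
    digitIntegral b S p = ∑' l, ((digitTransfer b S ^ l) p).eval 1 := by
  simp [digitIntegral, hS]

lemma digitIntegral_eq_eval_one_add (hS : S ⊂ Finset.range b) (p : ℝ[X]) :
    digitIntegral b S p = p.eval 1 + digitIntegral b S (digitTransfer b S p) := by
  rw [digitIntegral_apply hS, digitIntegral_apply hS,
    (summable_eval_one_digitTransfer_pow hS p).tsum_eq_zero_add]
  simp only [pow_zero, Module.End.one_apply, pow_succ, Module.End.mul_apply]

lemma abs_digitIntegral_le (hS : S ⊂ Finset.range b) {p : ℝ[X]} {C : ℝ}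
    (hp : ∀ y ∈ Set.Icc (0 : ℝ) 1, |p.eval y| ≤ C) :
    |digitIntegral b S p| ≤ (1 - (#S / b : ℝ))⁻¹ * C := by
  rw [digitIntegral_apply hS, ← Real.norm_eq_abs]
  exact tsum_of_norm_bounded (hasSum_card_div_pow_mul hS C) fun l =>
    abs_eval_digitTransfer_pow_le hS.subset hp l 1 (by simp)

lemma digitIntegral_one (hS : S ⊂ Finset.range b) : digitIntegral b S 1 = (1 - (#S / b : ℝ))⁻¹ := by
  have h := digitIntegral_eq_eval_one_add hS 1
  rw [digitTransfer_one, map_smul, eval_one, smul_eq_mul] at h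
  exact eq_inv_of_mul_eq_one_left (by linarith)

end DigitIntegral

/-- The `n < b ^ l` whose `l` base-`b` digits, leading zeros included, all lie in `S`. -/
def digitStrings (b : ℕ) (S : Finset ℕ) (l : ℕ) : Finset ℕ :=
  {n ∈ Finset.range (b ^ l) | ∀ i < l, n / b ^ i % b ∈ S}

section DigitStrings

variable {b a n l : ℕ} {S : Finset ℕ}

lemma mul_pow_add_div_pow_mod_of_lt {i : ℕ} (hb : 0 < b) (hi : i < l) :
    (a * b ^ l + n) / b ^ i % b = n / b ^ i % b := by
  obtain ⟨j, rfl⟩ := Nat.exists_eq_add_of_lt hi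
  have h : a * b ^ (i + j + 1) + n = n + b ^ i * (b * (a * b ^ j)) := by ring
  rw [h, Nat.add_mul_div_left _ _ (by positivity), Nat.add_mul_mod_self_left]

lemma mul_pow_add_div_pow_mod_self (hn : n < b ^ l) (ha : a < b) :
    (a * b ^ l + n) / b ^ l % b = a := by
  rw [add_comm, Nat.add_mul_div_right _ _ hn.pos, Nat.div_eq_of_lt hn, zero_add,
    Nat.mod_eq_of_lt ha]

lemma mul_pow_add_mem_digitStrings_succ (hn : n < b ^ l) (ha : a < b) :
    a * b ^ l + n ∈ digitStrings b S (l + 1) ↔ a ∈ S ∧ n ∈ digitStrings b S l := by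
  have hlt : a * b ^ l + n < b ^ (l + 1) := by
    calc a * b ^ l + n < (a + 1) * b ^ l := by rw [add_one_mul]; gcongr
      _ ≤ b ^ (l + 1) := by rw [pow_succ']; gcongr; exact ha
  have hlow : (∀ i < l, (a * b ^ l + n) / b ^ i % b ∈ S) ↔ ∀ i < l, n / b ^ i % b ∈ S :=
    forall₂_congr fun i hi => by rw [mul_pow_add_div_pow_mod_of_lt ha.pos hi]
  simp only [digitStrings, Finset.mem_filter, Finset.mem_range, hlt, hn, true_and,
    Nat.forall_lt_succ_right, hlow, mul_pow_add_div_pow_mod_self hn ha, and_comm]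

lemma sum_digitStrings_succ {M : Type*} [AddCommMonoid M] (hS : S ⊆ Finset.range b) (F : ℕ → M) :
    ∑ n ∈ digitStrings b S (l + 1), F n =
      ∑ a ∈ S, ∑ n ∈ digitStrings b S l, F (a * b ^ l + n) := by
  have lt_of_mem {l n : ℕ} (h : n ∈ digitStrings b S l) : n < b ^ l :=
    Finset.mem_range.mp (Finset.mem_filter.mp h).1
  rw [← Finset.sum_product' S (digitStrings b S l) fun a n => F (a * b ^ l + n)]
  symm
  refine Finset.sum_nbij' (fun x => x.1 * b ^ l + x.2) (fun n => (n / b ^ l, n % b ^ l))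
    ?_ ?_ ?_ ?_ fun _ _ => rfl
  · intro x hx
    obtain ⟨ha, hn⟩ := Finset.mem_product.mp hx
    exact (mul_pow_add_mem_digitStrings_succ (lt_of_mem hn) (Finset.mem_range.mp (hS ha))).mpr
      ⟨ha, hn⟩
  · intro n hn
    have hlt : n < b ^ l * b := pow_succ b l ▸ lt_of_mem hn
    refine Finset.mem_product.mpr <| (mul_pow_add_mem_digitStrings_succ
      (Nat.mod_lt n (Nat.pos_of_mul_pos_right hlt.pos)) (Nat.div_lt_of_lt_mul hlt)).mp ?_
    rwa [Nat.div_add_mod']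
  · intro x hx
    have hlt := lt_of_mem (Finset.mem_product.mp hx).2
    ext
    · simp only [mul_comm _ (b ^ l), Nat.mul_add_div hlt.pos,
        Nat.div_eq_of_lt hlt, add_zero]
    · simp only [Nat.mul_add_mod', Nat.mod_eq_of_lt hlt]
  · exact fun n _ => Nat.div_add_mod' n _

lemma eval_digitTransfer_pow (hb : b ≠ 0) (hS : S ⊆ Finset.range b) (l : ℕ) (p : ℝ[X]) (y : ℝ) :
    ((digitTransfer b S ^ l) p).eval y = ((b : ℝ) ^ l)⁻¹ *
      ∑ n ∈ digitStrings b S l, p.eval (1 - (n + 1 - y) / (b : ℝ) ^ l) := by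
  have hb0 : (b : ℝ) ≠ 0 := by exact_mod_cast hb
  induction l generalizing p with
  | zero => simp [digitStrings]
  | succ l ih =>
    simp only [pow_succ _ l, Module.End.mul_apply, ih, eval_digitTransfer, ← Finset.mul_sum,
      mul_inv, mul_assoc]
    rw [sum_digitStrings_succ hS, Finset.sum_comm]
    congr! 3 with n _
    refine Finset.sum_congr rfl fun a _ => congrArg p.eval ?_
    push_cast
    field_simp
    ring

end DigitStrings

/-- Integration in the complementary variable `y = 1 - x` against the Irwin measure of the
base-`b` strings without the digit `d`. It is `0` for `b ≤ d`. -/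
noncomputable def irwinIntegral (b d : ℕ) : ℝ[X] →ₗ[ℝ] ℝ :=
  digitIntegral b ((Finset.range b).erase d)

/-- The integral against the Irwin measure normalised to total mass `1`. -/
noncomputable def irwinMean (b d : ℕ) : ℝ[X] →ₗ[ℝ] ℝ := (b : ℝ)⁻¹ • irwinIntegral b d

lemma irwinMean_apply (b d : ℕ) (p : ℝ[X]) :
    irwinMean b d p = (b : ℝ)⁻¹ * irwinIntegral b d p := rfl

section Irwin

variable {b d : ℕ}

lemma erase_ssubset_range (hd : d < b) : (Finset.range b).erase d ⊂ Finset.range b :=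
  Finset.erase_ssubset (Finset.mem_range.mpr hd)

lemma inv_one_sub_card_erase_div (hd : d < b) :
    (1 - (#((Finset.range b).erase d) / b : ℝ))⁻¹ = b := by
  have hb : (b : ℝ) ≠ 0 := by exact_mod_cast hd.pos.ne'
  rw [Finset.card_erase_of_mem (Finset.mem_range.mpr hd), Finset.card_range,
    Nat.cast_pred hd.pos, sub_div, div_self hb, sub_sub_cancel, one_div, inv_inv]

lemma momentV_zero_eq_irwinIntegral (hd : d < b) (m : ℕ) :
    momentV b d 0 m = irwinIntegral b d (X ^ m) := by
  have hb : (b : ℝ) ≠ 0 := by exact_mod_cast hd.pos.ne'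
  rw [irwinIntegral, digitIntegral_apply (erase_ssubset_range hd), momentV]
  refine tsum_congr fun l => ?_
  have havoid : ∀ n, #{i ∈ Finset.range l | n / b ^ i % b = d} = 0 ↔
      ∀ i < l, n / b ^ i % b ∈ (Finset.range b).erase d := fun n => by
    simp [Finset.filter_eq_empty_iff, Nat.mod_lt _ hd.pos]
  simp only [eval_digitTransfer_pow hd.pos.ne' (Finset.erase_subset _ _), digitStrings,
    Finset.sum_filter, havoid, Finset.mul_sum, mul_ite, mul_zero, eval_pow, eval_X]
  refine Finset.sum_congr rfl fun n _ => if_congr Iff.rfl ?_ rfl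
  have hbase : 1 - ((n : ℝ) + 1 - 1) / (b : ℝ) ^ l = ((b : ℝ) ^ l - n) / (b : ℝ) ^ l := by
    field_simp
    ring
  rw [hbase, div_pow, mul_add_one, pow_add, pow_mul, mul_inv]
  ring

lemma irwinIntegral_one (hd : d < b) : irwinIntegral b d 1 = b := by
  rw [irwinIntegral, digitIntegral_one (erase_ssubset_range hd), inv_one_sub_card_erase_div hd]

lemma irwinMean_one (hd : d < b) : irwinMean b d 1 = 1 := by
  rw [irwinMean_apply, irwinIntegral_one hd, inv_mul_cancel₀ (by exact_mod_cast hd.pos.ne')]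

lemma abs_irwinMean_le (hd : d < b) {p : ℝ[X]} {C : ℝ}
    (hp : ∀ y ∈ Set.Icc (0 : ℝ) 1, |p.eval y| ≤ C) : |irwinMean b d p| ≤ C := by
  have hb : (0 : ℝ) < b := by exact_mod_cast hd.pos
  have h := abs_digitIntegral_le (erase_ssubset_range hd) hp
  rw [inv_one_sub_card_erase_div hd] at h
  rw [irwinMean_apply, abs_mul, abs_of_pos (inv_pos.mpr hb)]
  exact inv_mul_le_of_le_mul₀ hb.le ((abs_nonneg _).trans (hp 1 (by simp))) h

lemma irwinIntegral_eq (hd : d < b) (p : ℝ[X]) :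
    irwinIntegral b d p = p.eval 1 + irwinIntegral b d (digitTransfer b (Finset.range b) p) -
      irwinMean b d (p.comp (digitBranch b d)) := by
  rw [irwinIntegral, digitIntegral_eq_eval_one_add (erase_ssubset_range hd),
    digitTransfer_erase (Finset.mem_range.mpr hd), map_sub, map_smul, irwinMean_apply,
    irwinIntegral, smul_eq_mul, add_sub_assoc]

lemma irwinIntegral_realBernoulli_sub (hd : d < b) (k : ℕ) :
    irwinIntegral b d (realBernoulli k) - (b : ℝ)⁻¹ ^ k * irwinIntegral b d (realBernoulli k) =
      (realBernoulli k).eval 1 - irwinMean b d ((realBernoulli k).comp (digitBranch b d)) := by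
  have h := irwinIntegral_eq hd (realBernoulli k)
  rw [digitTransfer_range_realBernoulli hd.pos.ne', map_smul, smul_eq_mul] at h
  linarith

end Irwin

section Asymptotics

lemma isBigO_inv_pow_of_le {i j : ℕ} (hij : i ≤ j) :
    (fun b : ℕ => (b : ℝ)⁻¹ ^ j) =O[atTop] fun b : ℕ => (b : ℝ)⁻¹ ^ i := by
  refine .of_norm_eventuallyLE <| (eventually_ge_atTop 1).mono fun b hb => ?_
  have hinv : (b : ℝ)⁻¹ ≤ 1 := inv_le_one_of_one_le₀ (by exact_mod_cast hb)
  calc ‖(b : ℝ)⁻¹ ^ j‖ = (b : ℝ)⁻¹ ^ j := Real.norm_of_nonneg (by positivity)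
    _ ≤ (b : ℝ)⁻¹ ^ i := pow_le_pow_of_le_one (by positivity) hinv hij

lemma isBigO_inv_pow_mul {f : ℕ → ℝ} {i : ℕ} (hf : f =O[atTop] fun b : ℕ => (b : ℝ)⁻¹ ^ i)
    (n : ℕ) : (fun b : ℕ => (b : ℝ)⁻¹ ^ n * f b) =O[atTop] fun b : ℕ => (b : ℝ)⁻¹ ^ (n + i) := by
  simpa only [pow_add] using (isBigO_refl _ _).mul hf

variable (d : ℕ)

lemma irwinMean_isBigO_one (p : ℝ[X]) :
    (fun b => irwinMean b d p) =O[atTop] fun _ => (1 : ℝ) := by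
  obtain ⟨C, hC⟩ := exists_abs_eval_le_on_Icc p 0 1
  refine .of_bound C <| (eventually_gt_atTop d).mono fun b hd => ?_
  rw [norm_one, mul_one]
  exact abs_irwinMean_le hd hC

lemma irwinMean_comp_digitBranch_isBigO (p : ℝ[X]) (n : ℕ) :
    (fun b => irwinMean b d (p.comp (digitBranch b d)) -
      ∑ i ∈ Finset.range n, (taylor 1 p).coeff i * (-(b : ℝ)⁻¹) ^ i *
        irwinMean b d ((C (d + 1 : ℝ) - X) ^ i))
      =O[atTop] fun b : ℕ => (b : ℝ)⁻¹ ^ n := by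
  set c : ℕ → ℝ := fun i => (taylor 1 p).coeff i * (-1) ^ i
  have htail : (fun b : ℕ => ∑ i ∈ Finset.range (p.natDegree + 1), c (n + i) *
      ((b : ℝ)⁻¹ ^ (n + i) * irwinMean b d ((C (d + 1 : ℝ) - X) ^ (n + i))))
      =O[atTop] fun b : ℕ => (b : ℝ)⁻¹ ^ n := by
    refine .fun_sum fun i _ => .const_mul_left ?_ _
    simpa only [mul_one] using
      (isBigO_inv_pow_of_le (Nat.le_add_right n i)).mul (irwinMean_isBigO_one d _)
  refine htail.congr_left fun b => ?_
  have hdeg : p.natDegree < n + (p.natDegree + 1) := by omega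
  rw [comp_digitBranch p b d hdeg, map_sum]
  simp only [map_smul, smul_eq_mul]
  rw [Finset.sum_range_add_sub_sum_range]
  refine Finset.sum_congr rfl fun i _ => ?_
  rw [neg_pow (b : ℝ)⁻¹]
  ring

lemma irwinIntegral_realBernoulli_isBigO {k : ℕ} (hk : k ≠ 0) :
    (fun b => irwinIntegral b d (realBernoulli k)) =O[atTop] fun b : ℕ => (b : ℝ)⁻¹ ^ 1 := by
  have hcomp := irwinMean_comp_digitBranch_isBigO d (realBernoulli k) 1
  have hsmall : (fun b : ℕ => (b : ℝ)⁻¹ ^ k * irwinIntegral b d (realBernoulli k)) =o[atTop]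
      fun b => irwinIntegral b d (realBernoulli k) := by
    have hinv : (fun b : ℕ => (b : ℝ)⁻¹ ^ k) =o[atTop] fun _ => (1 : ℝ) := by
      rw [isLittleO_one_iff]
      simpa only [zero_pow hk] using (tendsto_inv_atTop_nhds_zero_nat (𝕜 := ℝ)).pow k
    simpa only [one_mul] using hinv.mul_isBigO (isBigO_refl _ _)
  refine hsmall.right_isBigO_sub.trans <| hcomp.neg_left.congr' ?_ .rfl
  filter_upwards [eventually_gt_atTop d] with b hd
  rw [irwinIntegral_realBernoulli_sub hd, Finset.sum_range_one, taylor_coeff_zero, pow_zero,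
    pow_zero, irwinMean_one hd]
  ring

lemma irwinMean_sub_unitIntegral_isBigO (p : ℝ[X]) :
    (fun b => irwinMean b d p - unitIntegral p) =O[atTop] fun b : ℕ => (b : ℝ)⁻¹ ^ 2 := by
  refine isBigO_of_realBernoulli (fun b => irwinMean b d - unitIntegral) (fun k => ?_) p
  simp only [LinearMap.sub_apply, unitIntegral_realBernoulli]
  rcases eq_or_ne k 0 with rfl | hk
  · refine (isBigO_zero _ _).congr' ?_ .rfl
    filter_upwards [eventually_gt_atTop d] with b hd
    simp [realBernoulli_zero, irwinMean_one hd]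
  · simpa [hk, irwinMean_apply] using
      isBigO_inv_pow_mul (irwinIntegral_realBernoulli_isBigO d hk) 1

lemma irwinMean_comp_digitBranch_expansion (p : ℝ[X]) :
    (fun b => irwinMean b d (p.comp (digitBranch b d)) -
      (p.eval 1 - (derivative p).eval 1 * (d + 1 / 2) * (b : ℝ)⁻¹ +
        (derivative (derivative p)).eval 1 / 2 * (d ^ 2 + d + 1 / 3) * (b : ℝ)⁻¹ ^ 2))
      =O[atTop] fun b : ℕ => (b : ℝ)⁻¹ ^ 3 := by
  set s : ℝ[X] := C (d + 1 : ℝ) - X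
  have hcoeff : (taylor 1 p).coeff 2 = (derivative (derivative p)).eval 1 / 2 :=
    eq_div_of_mul_eq two_ne_zero ((mul_comm _ _).trans (two_mul_taylor_coeff_two 1 p))
  have hremainder := irwinMean_comp_digitBranch_isBigO d p 3
  have hfirst := (isBigO_inv_pow_mul (irwinMean_sub_unitIntegral_isBigO d (s ^ 1)) 1).const_mul_left
    ((derivative p).eval 1)
  have hsecond := ((isBigO_inv_pow_mul (irwinMean_sub_unitIntegral_isBigO d (s ^ 2)) 2).trans
    (isBigO_inv_pow_of_le (by norm_num : 3 ≤ 2 + 2))).const_mul_left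
    ((derivative (derivative p)).eval 1 / 2)
  refine ((hremainder.sub hfirst).add hsecond).congr' ?_ .rfl
  filter_upwards [eventually_gt_atTop d] with b hd
  simp only [Finset.sum_range_succ, Finset.sum_range_zero, taylor_coeff_zero, taylor_coeff_one,
    hcoeff, pow_zero, irwinMean_one hd, unitIntegral_const_sub_X_pow, s]
  push_cast
  ring

lemma irwinIntegral_digitTransfer_range_expansion (p : ℝ[X]) :
    (fun b => irwinIntegral b d (digitTransfer b (Finset.range b) p) -
      (b * unitIntegral p +
        (b : ℝ)⁻¹ * irwinIntegral b d (realBernoulli 1) * (p.eval 1 - p.eval 0)))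
      =O[atTop] fun b : ℕ => (b : ℝ)⁻¹ ^ 3 := by
  refine isBigO_of_realBernoulli (fun b => irwinIntegral b d ∘ₗ digitTransfer b (Finset.range b) -
    ((b : ℝ) • unitIntegral + ((b : ℝ)⁻¹ * irwinIntegral b d (realBernoulli 1)) •
      (leval 1 - leval 0))) (fun k => ?_) p
  have hremainder : (fun b : ℕ => if k < 2 then 0 else
      (b : ℝ)⁻¹ ^ k * irwinIntegral b d (realBernoulli k))
      =O[atTop] fun b : ℕ => (b : ℝ)⁻¹ ^ 3 := by
    split_ifs with hk
    · exact isBigO_zero _ _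
    · exact (isBigO_inv_pow_mul (irwinIntegral_realBernoulli_isBigO d (by omega)) k).trans
        (isBigO_inv_pow_of_le (by omega))
  refine hremainder.congr' ?_ .rfl
  filter_upwards [eventually_gt_atTop d] with b hd
  have hendpoints : (realBernoulli k).eval 1 - (realBernoulli k).eval 0 = if k = 1 then 1 else 0 :=
    sub_eq_of_eq_add' (bernoulliFun_eval_one k)
  simp only [LinearMap.sub_apply, LinearMap.add_apply, LinearMap.smul_apply, LinearMap.comp_apply,
    leval_apply, digitTransfer_range_realBernoulli hd.pos.ne', map_smul, smul_eq_mul,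
    unitIntegral_realBernoulli, hendpoints]
  obtain rfl | rfl | hk : k = 0 ∨ k = 1 ∨ 2 ≤ k := by omega
  · simp [realBernoulli_zero, irwinIntegral_one hd]
  · simp
  · simp [show ¬k < 2 by omega, show k ≠ 0 by omega, show k ≠ 1 by omega]

lemma irwinIntegral_realBernoulli_one_expansion :
    (fun b => irwinIntegral b d (realBernoulli 1) - (d + 1 / 2) * (b : ℝ)⁻¹)
      =O[atTop] fun b : ℕ => (b : ℝ)⁻¹ ^ 2 := by
  have hself := isBigO_inv_pow_mul (irwinIntegral_realBernoulli_isBigO d one_ne_zero) 1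
  have hcomp := (irwinMean_comp_digitBranch_expansion d (realBernoulli 1)).trans
    (isBigO_inv_pow_of_le (by norm_num : 2 ≤ 3))
  refine (hself.sub hcomp).congr' ?_ .rfl
  filter_upwards [eventually_gt_atTop d] with b hd
  have hderiv : derivative (realBernoulli 1) = 1 := by simp [realBernoulli_one]
  have heq := irwinIntegral_realBernoulli_sub hd 1
  simp only [hderiv, derivative_one, eval_one, eval_zero]
  linarith

theorem irwinIntegral_expansion (p : ℝ[X]) :
    (fun b => irwinIntegral b d p -
      (b * unitIntegral p + (d + 1 / 2) * (derivative p).eval 1 / b -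
        ((d ^ 2 + d + 1 / 3) * (derivative (derivative p)).eval 1 / 2 -
          (d + 1 / 2) * (p.eval 1 - p.eval 0)) / (b : ℝ) ^ 2))
      =O[atTop] fun b : ℕ => (b : ℝ)⁻¹ ^ 3 := by
  have htransfer := irwinIntegral_digitTransfer_range_expansion d p
  have hbernoulli := (isBigO_inv_pow_mul (irwinIntegral_realBernoulli_one_expansion d)
    1).const_mul_left (p.eval 1 - p.eval 0)
  have hcomp := irwinMean_comp_digitBranch_expansion d p
  refine ((htransfer.add hbernoulli).sub hcomp).congr' ?_ .rfl
  filter_upwards [eventually_gt_atTop d] with b hd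
  rw [irwinIntegral_eq hd p]
  ring

end Asymptotics

end

theorem momentV_zero_asymptotic (d m : ℕ) (hm : 1 ≤ m) :
    (fun b : ℕ => momentV b d 0 m -
      ((b : ℝ) / ((m : ℝ) + 1) + ((d : ℝ) + 1 / 2) * m / (b : ℝ)
        - (((d : ℝ) ^ 2 + d + 1 / 3) * ((m : ℝ) * ((m : ℝ) - 1)) / 2 - ((d : ℝ) + 1 / 2))
          / (b : ℝ) ^ 2))
      =O[atTop] fun b : ℕ => ((b : ℝ) ^ 3)⁻¹ := by
  have hmoment : ∀ᶠ b : ℕ in atTop, momentV b d 0 m = irwinIntegral b d (Polynomial.X ^ m) :=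
    (eventually_gt_atTop d).mono fun b hd => momentV_zero_eq_irwinIntegral hd m
  have hexpansion := irwinIntegral_expansion d (Polynomial.X ^ m)
  simp only [unitIntegral_X_pow, eval_one_derivative_X_pow, eval_one_derivative_derivative_X_pow,
    Polynomial.eval_pow, Polynomial.eval_X, one_pow, zero_pow (Nat.ne_of_gt hm), inv_pow]
    at hexpansion
  refine hexpansion.congr' ?_ .rfl
  filter_upwards [hmoment] with b hb
  rw [hb]
  ring
end

section
/- For every integer b ≥ 2, the exact convergent-series identity K(b,0) = b·log b + ∑_{m=1}^∞ (−1)^{m−1} ζ(m+1) u_{0;m}(b,0)/b^{m+1} holds, where the series on the right converges absolutely. -/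
open Filter Asymptotics

/-- The Irwin harmonic sum `I(b,d,k)`: sum of `1/m` over positive integers `m`
whose base-`b` digit list contains the digit `d` exactly `k` times. -/
noncomputable def irwinSum (b d k : ℕ) : ℝ :=
  ∑' m : ℕ, if 0 < m ∧ (Nat.digits b m).count d = k then (1 : ℝ) / m else 0

/-- `ζ(s) = ∑_{n ≥ 1} n^{-s}` for an integer exponent. -/
noncomputable def zetaR (s : ℕ) : ℝ := ∑' n : ℕ, 1 / ((n : ℝ) + 1) ^ s

/-!
Let `μ` be the measure putting mass `b ^ (-l)` at `n / b ^ l` for every string of `l` base-`b`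
digits avoiding `d`, where `n` is the number it spells, and let `S z = ∫ (z + x)⁻¹ dμ(x)`.
Splitting off the leading digit gives `S z = 1 / z + ∑_{a ≠ d} S (b z + a)`. For `d = 0` this holds
at `z = 0` too, without the term `1 / z`, and there `S 0 = K(b,0)`. So for `n ≥ 1` the sum of `S`
over the block `[b n, b n + b)` exceeds `S n` by `S (b n) - 1 / n`, and for `n = 0` by `S 0`. Since
`μ` has mass `b`, `S n = b / n + O(n⁻²)`, hence `∑_{M ≤ n < b M} S n → b log b`, and summing over
the blocks gives `K(b,0) = b log b + ∑_{n ≥ 1} (1 / n - S (b n))`. Expanding each `S (b n)` in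
powers of `1 / (b n)` produces the moments of `μ` and the zeta values.
-/

namespace KempnerSeries

open Finset Topology
open scoped NNReal

section InfiniteSums

lemma hasSum_sigma_iff_of_nonneg {ι : Type*} {κ : ι → Type*} [∀ i, Fintype (κ i)]
    {f : (Σ i, κ i) → ℝ} (hf : ∀ p, 0 ≤ f p) {s : ℝ} :
    HasSum f s ↔ HasSum (fun i => ∑ k, f ⟨i, k⟩) s := by
  refine ⟨fun h => h.sigma fun i => hasSum_fintype _, fun h => ?_⟩
  refine h.sigma_of_hasSum (fun i => hasSum_fintype _) ?_
  rw [summable_sigma_of_nonneg hf]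
  exact ⟨fun i => (hasSum_fintype _).summable, by simpa only [tsum_fintype] using h.summable⟩

lemma hasSum_one_div_add {𝕜 : Type*} [NormedField 𝕜] {x z : 𝕜} (h : ‖x‖ < ‖z‖) :
    HasSum (fun j : ℕ => (-1) ^ j * x ^ j / z ^ (j + 1)) (1 / (z + x)) := by
  have z_pos : 0 < ‖z‖ := (norm_nonneg x).trans_lt h
  have z_ne : z ≠ 0 := norm_pos_iff.1 z_pos
  have ratio_lt : ‖-x / z‖ < 1 := by rwa [norm_div, norm_neg, div_lt_one z_pos]
  convert (hasSum_geometric_of_norm_lt_one ratio_lt).div_const z using 1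
  · funext j
    rw [← neg_pow, pow_succ, div_pow, div_div]
  · rw [← one_div, div_div, sub_mul, one_mul, div_mul_cancel₀ _ z_ne, sub_neg_eq_add]

lemma hasSum_moment_div_pow {𝕜 ι : Type*} [NormedField 𝕜] [CompleteSpace 𝕜] {w x : ι → 𝕜}
    {r : ℝ≥0} {z : 𝕜} (hw : Summable fun i => ‖w i‖) (hx : ∀ i, ‖x i‖ ≤ r) (hz : r < ‖z‖) :
    HasSum (fun j : ℕ => (-1) ^ j * (∑' i, w i * x i ^ j) / z ^ (j + 1))
      (∑' i, w i / (z + x i)) := by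
  have z_pos : 0 < ‖z‖ := r.coe_nonneg.trans_lt hz
  have geometric : Summable fun j : ℕ => (r : ℝ) ^ j / ‖z‖ ^ (j + 1) := by
    have h := (summable_geometric_of_lt_one (by positivity) ((div_lt_one z_pos).2 hz)).div_const ‖z‖
    simpa only [div_pow, div_div, ← pow_succ] using h
  have double : Summable fun q : ι × ℕ => w q.1 * ((-1) ^ q.2 * x q.1 ^ q.2 / z ^ (q.2 + 1)) := by
    refine .of_norm_bounded (hw.mul_of_nonneg geometric (fun _ => norm_nonneg _)
      fun _ => by positivity) fun q => ?_
    rw [norm_mul, norm_div, norm_mul, norm_pow, norm_pow, norm_pow, norm_neg, norm_one, one_pow,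
      one_mul]
    gcongr
    exact hx q.1
  have row (i : ι) : HasSum (fun j : ℕ => w i * ((-1) ^ j * x i ^ j / z ^ (j + 1)))
      (w i / (z + x i)) := by
    simpa only [mul_one_div] using (hasSum_one_div_add ((hx i).trans_lt hz)).mul_left (w i)
  have column (j : ℕ) : HasSum (fun i => w i * ((-1) ^ j * x i ^ j / z ^ (j + 1)))
      ((-1) ^ j * (∑' i, w i * x i ^ j) / z ^ (j + 1)) := by
    refine (Summable.hasSum_iff (double.prod_symm.prod_factor j)).2 ?_
    rw [← tsum_mul_left, ← tsum_div_const]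
    exact tsum_congr fun i => by simp only [Prod.fst_swap, Prod.snd_swap]; ring
  rw [(double.hasSum.prod_fiberwise row).tsum_eq]
  exact ((Equiv.prodComm ℕ ι).hasSum_iff.2 double.hasSum).prod_fiberwise column

end InfiniteSums

section HarmonicAsymptotics

lemma sum_range_mul {M : Type*} [AddCommMonoid M] (f : ℕ → M) (m b : ℕ) :
    ∑ n ∈ range (m * b), f n = ∑ n ∈ range m, ∑ a ∈ range b, f (n * b + a) := by
  induction m with
  | zero => simp
  | succ m ih => rw [add_mul, one_mul, sum_range_add, ih, sum_range_succ]

variable {f : ℕ → ℝ} {c : ℝ}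

lemma tendsto_sum_range_sub_mul_log (hf : Summable fun n : ℕ => f n - c / (n + 1)) :
    Tendsto (fun M : ℕ => ∑ n ∈ range M, f n - c * Real.log M) atTop
      (𝓝 (∑' n : ℕ, (f n - c / (n + 1)) + c * Real.eulerMascheroniConstant)) := by
  refine (hf.hasSum.tendsto_sum_nat.add
    (Real.tendsto_harmonic_sub_log.const_mul c)).congr fun M => ?_
  have : ∑ n ∈ range M, c / ((n : ℝ) + 1) = c * harmonic M := by
    simp [harmonic, mul_sum, div_eq_mul_inv]
  rw [sum_sub_distrib, this]
  ring

lemma tendsto_sum_range_mul_sub_sum_range (hf : Summable fun n : ℕ => f n - c / (n + 1))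
    {b : ℕ} (hb : 0 < b) :
    Tendsto (fun M : ℕ => ∑ n ∈ range (M * b), f n - ∑ n ∈ range M, f n) atTop
      (𝓝 (c * Real.log b)) := by
  have h := tendsto_sum_range_sub_mul_log hf
  have h_mul := h.comp (tendsto_id.atTop_mul_const' hb)
  have h_sub := (h_mul.sub h).add_const (c * Real.log b)
  rw [sub_self, zero_add] at h_sub
  refine h_sub.congr' ?_
  filter_upwards [eventually_gt_atTop 0] with M hM
  have : Real.log ((M * b : ℕ) : ℝ) = Real.log M + Real.log b := by
    rw [Nat.cast_mul, Real.log_mul (by positivity) (by positivity)]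
  simp only [Function.comp_apply, id_eq, this]
  ring

end HarmonicAsymptotics

section ZetaSeries

lemma hasSum_zetaR {s : ℕ} (hs : 1 < s) :
    HasSum (fun n : ℕ => 1 / ((n : ℝ) + 1) ^ s) (zetaR s) := by
  have h := (summable_nat_add_iff 1).2 (Real.summable_one_div_nat_pow.2 hs)
  exact Summable.hasSum (by simpa using h)

lemma hasSum_div_mul_pow (c r : ℝ) {s : ℕ} (hs : 1 < s) :
    HasSum (fun n : ℕ => c / (((n : ℝ) + 1) * r) ^ s) (zetaR s * c / r ^ s) := by
  simpa only [mul_pow, div_mul_div_comm, one_mul, mul_div_assoc] using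
    (hasSum_zetaR hs).mul_right (c / r ^ s)

lemma summable_div_mul_pow {u : ℕ → ℝ} {C r : ℝ} (hu : ∀ j, |u j| ≤ C) (hr : 1 < r) :
    Summable fun q : ℕ × ℕ => u q.1 / (((q.2 : ℝ) + 1) * r) ^ (q.1 + 2) := by
  have hC : 0 ≤ C := (abs_nonneg _).trans (hu 0)
  have hr0 : 0 < r := one_pos.trans hr
  have geometric : Summable fun j : ℕ => C * (1 / r) ^ j :=
    (summable_geometric_of_lt_one (by positivity) ((div_lt_one hr0).2 hr)).mul_left C
  refine .of_norm_bounded (geometric.mul_of_nonneg (hasSum_zetaR one_lt_two).summable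
    (fun _ => by positivity) fun _ => by positivity) fun ⟨j, n⟩ => ?_
  have hn : (1 : ℝ) ≤ n + 1 := by simp
  calc ‖u j / (((n : ℝ) + 1) * r) ^ (j + 2)‖
      = |u j| / (((n : ℝ) + 1) ^ (j + 2) * r ^ (j + 2)) := by
        rw [norm_div, Real.norm_eq_abs, Real.norm_of_nonneg (by positivity), mul_pow]
    _ ≤ C / (((n : ℝ) + 1) ^ 2 * r ^ j) := by
        gcongr
        exacts [hu j, by omega, hr.le, by omega]
    _ = C * (1 / r) ^ j * (1 / ((n : ℝ) + 1) ^ 2) := by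
        rw [one_div_pow]
        field_simp

end ZetaSeries

section DigitFree

/-- The numbers spelled by the strings of `l` base-`b` digits that avoid `d`. Leading zeros count
as digits, so for `d = 0` these are the numbers with exactly `l` digits, none of them zero. -/
def digitFree (b d l : ℕ) : Finset ℕ :=
  {n ∈ range (b ^ l) | ∀ i < l, n / b ^ i % b ≠ d}

variable {b d l n : ℕ}

lemma mem_digitFree : n ∈ digitFree b d l ↔ n < b ^ l ∧ ∀ i < l, n / b ^ i % b ≠ d := by
  simp [digitFree]

lemma digitFree_zero (b d : ℕ) : digitFree b d 0 = {0} := by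
  ext n
  simp [mem_digitFree]

lemma mem_digitFree_succ (hb : 0 < b) :
    n ∈ digitFree b d (l + 1) ↔ n / b ^ l ∈ (range b).erase d ∧ n % b ^ l ∈ digitFree b d l := by
  have lower_digit {i : ℕ} (hi : i < l) : n % b ^ l / b ^ i % b = n / b ^ i % b := by
    rw [← Nat.add_sub_of_le hi.le, pow_add, Nat.mod_mul_right_div_self,
      Nat.mod_mod_of_dvd _ (dvd_pow_self b (Nat.sub_ne_zero_of_lt hi))]
  have lt_iff : n < b ^ (l + 1) ↔ n / b ^ l < b := by
    rw [Nat.div_lt_iff_lt_mul (by positivity), pow_succ']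
  simp only [mem_digitFree, mem_erase, mem_range, Nat.forall_lt_succ_right, lt_iff,
    Nat.mod_lt n (pow_pos hb l), true_and]
  constructor
  · rintro ⟨hlt, hlow, htop⟩
    rw [Nat.mod_eq_of_lt hlt] at htop
    exact ⟨⟨htop, hlt⟩, fun i hi => by rw [lower_digit hi]; exact hlow i hi⟩
  · rintro ⟨⟨htop, hlt⟩, hlow⟩
    refine ⟨hlt, fun i hi => by rw [← lower_digit hi]; exact hlow i hi, ?_⟩
    rwa [Nat.mod_eq_of_lt hlt]

lemma sum_digitFree_succ {M : Type*} [AddCommMonoid M] (hb : 0 < b) (d l : ℕ) (g : ℕ → M) :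
    ∑ n ∈ digitFree b d (l + 1), g n =
      ∑ a ∈ (range b).erase d, ∑ n ∈ digitFree b d l, g (a * b ^ l + n) := by
  rw [← sum_product']
  refine sum_nbij' (fun n => (n / b ^ l, n % b ^ l)) (fun p => p.1 * b ^ l + p.2)
    (fun n hn => mem_product.2 ((mem_digitFree_succ hb).1 hn)) ?_
    (fun n _ => Nat.div_add_mod' n _) ?_ fun n _ => by rw [Nat.div_add_mod']
  all_goals
    rintro ⟨a, n⟩ han
    obtain ⟨ha, hn⟩ := mem_product.1 han
    have hlt : n < b ^ l := (mem_digitFree.1 hn).1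
    have hdiv : (a * b ^ l + n) / b ^ l = a := by
      rw [mul_comm, Nat.mul_add_div (by positivity), Nat.div_eq_of_lt hlt, add_zero]
    have hmod : (a * b ^ l + n) % b ^ l = n := by
      rw [Nat.mul_add_mod_self_right, Nat.mod_eq_of_lt hlt]
  · exact (mem_digitFree_succ hb).2 ⟨hdiv.symm ▸ ha, hmod.symm ▸ hn⟩
  · exact Prod.ext hdiv hmod

lemma card_digitFree (hd : d < b) (l : ℕ) : #(digitFree b d l) = (b - 1) ^ l := by
  induction l with
  | zero => simp [digitFree_zero]
  | succ l ih =>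
    rw [card_eq_sum_ones, sum_digitFree_succ (by omega)]
    simp [ih, card_erase_of_mem (mem_range.2 hd), pow_succ']

lemma mem_digitFree_zero_iff_digits (hb : 2 ≤ b) :
    n ∈ digitFree b 0 l ↔ (b.digits n).count 0 = 0 ∧ (b.digits n).length = l := by
  rw [mem_digitFree, ← Nat.digits_length_le_iff (by omega)]
  simp only [← Nat.getD_digits n _ hb, List.count_eq_zero]
  constructor
  · rintro ⟨hle, hne⟩
    have hlen : (b.digits n).length = l := by
      by_contra h
      exact hne _ (by omega) (List.getD_eq_default _ _ le_rfl)
    refine ⟨fun hmem => ?_, hlen⟩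
    obtain ⟨i, hi, hi0⟩ := List.mem_iff_getElem.1 hmem
    exact hne i (hlen ▸ hi) (by rw [List.getD_eq_getElem _ _ hi, hi0])
  · rintro ⟨hmem, rfl⟩
    refine ⟨le_rfl, fun i hi h => hmem ?_⟩
    rw [List.getD_eq_getElem _ _ hi] at h
    exact h ▸ List.getElem_mem hi

end DigitFree

/-- The finite strings of base-`b` digits avoiding `d`, each encoded as its length together with the
number it spells. They index the atoms of the Irwin measure for `k = 0`. -/
abbrev DigitFreeString (b d : ℕ) : Type := Σ l, digitFree b d l

namespace DigitFreeString

variable {b d : ℕ}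

/-- The mass of the atom of the Irwin measure given by a string. -/
noncomputable def weight (p : DigitFreeString b d) : ℝ := ((b : ℝ) ^ p.1)⁻¹

/-- The location of the atom of the Irwin measure given by a string: the fraction `0.s` in base `b`
for a string `s`. -/
noncomputable def point (p : DigitFreeString b d) : ℝ := (p.2 : ℕ) / (b : ℝ) ^ p.1

lemma weight_nonneg (p : DigitFreeString b d) : 0 ≤ p.weight := by
  unfold weight
  positivity

lemma point_nonneg (p : DigitFreeString b d) : 0 ≤ p.point := by
  unfold point
  positivity

lemma point_le_one (p : DigitFreeString b d) : p.point ≤ 1 := by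
  have : ((p.2 : ℕ) : ℝ) ≤ (b : ℝ) ^ p.1 := by exact_mod_cast (mem_digitFree.1 p.2.2).1.le
  exact div_le_one_of_le₀ this (by positivity)

lemma weight_div_add_point (hb : 0 < b) (p : DigitFreeString b d) (z : ℝ) :
    p.weight / (z + p.point) = 1 / (z * (b : ℝ) ^ p.1 + (p.2 : ℕ)) := by
  have : (b : ℝ) ^ p.1 ≠ 0 := by positivity
  rw [weight, point, ← one_div, div_div, mul_add, mul_div_cancel₀ _ this, mul_comm z]

lemma hasSum_weight (hd : d < b) : HasSum (weight (b := b) (d := d)) b := by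
  have hb : (1 : ℝ) ≤ b := by exact_mod_cast Nat.one_le_of_lt hd
  rw [hasSum_sigma_iff_of_nonneg weight_nonneg]
  have h := hasSum_geometric_of_lt_one (r := ((b : ℝ) - 1) / b)
    (div_nonneg (by linarith) (by linarith)) (by rw [div_lt_one (by linarith)]; linarith)
  convert h using 1
  · funext l
    rw [div_pow, div_eq_mul_inv]
    simp [weight, card_digitFree hd, Nat.cast_pred (Nat.zero_lt_of_lt hd)]
  · field_simp
    ring

lemma weight_mul_point_pow_le (p : DigitFreeString b d) (m : ℕ) :
    p.weight * p.point ^ m ≤ p.weight :=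
  mul_le_of_le_one_right p.weight_nonneg (pow_le_one₀ p.point_nonneg p.point_le_one)

lemma weight_mul_point_pow_nonneg (p : DigitFreeString b d) (m : ℕ) :
    0 ≤ p.weight * p.point ^ m :=
  mul_nonneg p.weight_nonneg (pow_nonneg p.point_nonneg m)

lemma sum_weight_mul_point_pow (b d l m : ℕ) :
    ∑ n : digitFree b d l, weight ⟨l, n⟩ * point ⟨l, n⟩ ^ m =
      ((b : ℝ) ^ (l * (m + 1)))⁻¹ * ∑ n ∈ range (b ^ l),
        if #{i ∈ range l | n / b ^ i % b = d} = 0 then (n : ℝ) ^ m else 0 := by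
  have support :
      {n ∈ range (b ^ l) | #{i ∈ range l | n / b ^ i % b = d} = 0} = digitFree b d l := by
    simp only [digitFree, card_eq_zero, filter_eq_empty_iff, mem_range, ne_eq]
  rw [← sum_filter, support, mul_sum, ← sum_coe_sort (digitFree b d l)]
  refine sum_congr rfl fun n _ => ?_
  rw [weight, point, div_pow, ← pow_mul, mul_add_one, pow_add, mul_inv]
  ring

lemma hasSum_weight_mul_point_pow (hd : d < b) (m : ℕ) :
    HasSum (fun p : DigitFreeString b d => p.weight * p.point ^ m) (momentU b d 0 m) := by
  have h := (Summable.of_nonneg_of_le (fun p => weight_mul_point_pow_nonneg p m)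
    (fun p => weight_mul_point_pow_le p m) (hasSum_weight hd).summable).hasSum
  have rows := (hasSum_sigma_iff_of_nonneg fun p => weight_mul_point_pow_nonneg p m).1 h
  simp only [sum_weight_mul_point_pow] at rows
  rwa [← rows.tsum_eq] at h

end DigitFreeString

open DigitFreeString

section Moments

variable {b d : ℕ}

lemma momentU_zero (hd : d < b) : momentU b d 0 0 = b :=
  (hasSum_weight_mul_point_pow hd 0).unique (by simpa using hasSum_weight hd)

lemma abs_momentU_le (hd : d < b) (m : ℕ) : |momentU b d 0 m| ≤ b := by
  have h := hasSum_weight_mul_point_pow hd m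
  rw [abs_of_nonneg (h.nonneg fun p => weight_mul_point_pow_nonneg p m)]
  exact hasSum_le (fun p => weight_mul_point_pow_le p m) h (hasSum_weight hd)

end Moments

section Stieltjes

variable {b d : ℕ} {z : ℝ}

/-- The Stieltjes transform `∫ (z + x)⁻¹ dμ(x)` of the Irwin measure `μ` for `k = 0`. -/
noncomputable def stieltjes (b d : ℕ) (z : ℝ) : ℝ :=
  ∑' p : DigitFreeString b d, p.weight / (z + p.point)

/-- The contribution of the strings of length `l` to `stieltjes b d z`, in which the powers of `b`
coming from `weight` and `point` have been cancelled. -/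
noncomputable def stieltjesLevel (b d : ℕ) (z : ℝ) (l : ℕ) : ℝ :=
  ∑ n ∈ digitFree b d l, 1 / (z * (b : ℝ) ^ l + n)

lemma weight_div_add_point_nonneg (hz : 0 ≤ z) (p : DigitFreeString b d) :
    0 ≤ p.weight / (z + p.point) :=
  div_nonneg p.weight_nonneg (add_nonneg hz p.point_nonneg)

lemma weight_div_add_point_le (hz : 0 < z) (p : DigitFreeString b d) :
    p.weight / (z + p.point) ≤ p.weight / z :=
  div_le_div_of_nonneg_left p.weight_nonneg hz (le_add_of_nonneg_right p.point_nonneg)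

lemma hasSum_stieltjes (hd : d < b) (hz : 0 < z) :
    HasSum (fun p : DigitFreeString b d => p.weight / (z + p.point)) (stieltjes b d z) :=
  (Summable.of_nonneg_of_le (weight_div_add_point_nonneg hz.le) (weight_div_add_point_le hz)
    ((hasSum_weight hd).summable.div_const z)).hasSum

lemma stieltjes_le (hd : d < b) (hz : 0 < z) : stieltjes b d z ≤ b / z :=
  hasSum_le (weight_div_add_point_le hz) (hasSum_stieltjes hd hz) ((hasSum_weight hd).div_const z)

lemma le_stieltjes (hd : d < b) (hz : 0 < z) : b / (z + 1) ≤ stieltjes b d z := by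
  refine hasSum_le (fun p => ?_) ((hasSum_weight hd).div_const (z + 1)) (hasSum_stieltjes hd hz)
  exact div_le_div_of_nonneg_left p.weight_nonneg (add_pos_of_pos_of_nonneg hz p.point_nonneg)
    (add_le_add_right p.point_le_one z)

lemma hasSum_stieltjesLevel_iff (hb : 0 < b) (hz : 0 ≤ z) {s : ℝ} :
    HasSum (stieltjesLevel b d z) s ↔
      HasSum (fun p : DigitFreeString b d => p.weight / (z + p.point)) s := by
  rw [hasSum_sigma_iff_of_nonneg (weight_div_add_point_nonneg hz)]
  simp only [weight_div_add_point hb]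
  refine iff_of_eq (congrArg (HasSum · s _) (funext fun l => ?_))
  exact (sum_coe_sort (digitFree b d l) fun n => 1 / (z * (b : ℝ) ^ l + n)).symm

lemma stieltjesLevel_zero (b d : ℕ) (z : ℝ) : stieltjesLevel b d z 0 = 1 / z := by
  simp [stieltjesLevel, digitFree_zero]

lemma stieltjesLevel_succ (hb : 0 < b) (d : ℕ) (z : ℝ) (l : ℕ) :
    stieltjesLevel b d z (l + 1) = ∑ a ∈ (range b).erase d, stieltjesLevel b d (b * z + a) l := by
  rw [stieltjesLevel, sum_digitFree_succ hb]
  refine sum_congr rfl fun a _ => sum_congr rfl fun n _ => ?_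
  push_cast
  ring

-- `hpos` allows `z = 0` when `d = 0`; the empty string then contributes the junk value `1 / 0 = 0`.
lemma stieltjes_eq_one_div_add_sum (hd : d < b) (hz : 0 ≤ z)
    (hpos : ∀ a ∈ (range b).erase d, 0 < b * z + a) :
    stieltjes b d z = 1 / z + ∑ a ∈ (range b).erase d, stieltjes b d (b * z + a) := by
  have hb : 0 < b := Nat.zero_lt_of_lt hd
  have tail : HasSum (fun l => stieltjesLevel b d z (l + 1))
      (∑ a ∈ (range b).erase d, stieltjes b d (b * z + a)) := by
    simp only [stieltjesLevel_succ hb]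
    exact hasSum_sum fun a ha =>
      (hasSum_stieltjesLevel_iff hb (hpos a ha).le).2 (hasSum_stieltjes hd (hpos a ha))
  rw [← stieltjesLevel_zero b d z]
  exact ((hasSum_stieltjesLevel_iff hb hz).1 tail.zero_add).tsum_eq

lemma hasSum_momentU_div_pow (hd : d < b) (hz : 1 < z) :
    HasSum (fun j : ℕ => (-1) ^ j * momentU b d 0 j / z ^ (j + 1)) (stieltjes b d z) := by
  have h := hasSum_moment_div_pow (w := weight (b := b) (d := d)) (x := point) (r := 1) (z := z)
    (hasSum_weight hd).summable.norm
    (fun p => by simpa [abs_of_nonneg p.point_nonneg] using p.point_le_one)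
    (by simpa [abs_of_pos (one_pos.trans hz)] using hz)
  rw [stieltjes]
  simpa only [(hasSum_weight_mul_point_pow hd _).tsum_eq] using h

lemma hasSum_div_sub_stieltjes (hd : d < b) (hz : 1 < z) :
    HasSum (fun j : ℕ => (-1) ^ j * momentU b d 0 (j + 1) / z ^ (j + 2))
      (b / z - stieltjes b d z) := by
  have h := ((hasSum_nat_add_iff' 1).2 (hasSum_momentU_div_pow hd hz)).neg
  simpa [momentU_zero hd, pow_succ (-1 : ℝ), neg_div] using h

lemma summable_stieltjes_natCast_sub (hd : d < b) :
    Summable fun n : ℕ => stieltjes b d n - b / (n + 1) := by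
  rw [← summable_nat_add_iff 1]
  refine .of_nonneg_of_le (fun n => ?_) (fun n => ?_)
    ((hasSum_zetaR one_lt_two).summable.mul_left (b : ℝ))
  · exact sub_nonneg.2 (le_stieltjes hd (by positivity))
  · push_cast
    calc stieltjes b d (n + 1) - b / (n + 1 + 1)
        ≤ b / ((n : ℝ) + 1) - b / (n + 1 + 1) :=
          sub_le_sub_right (stieltjes_le hd (by positivity)) _
      _ = b * (1 / (((n : ℝ) + 1) * (n + 1 + 1))) := by
          field_simp
          ring
      _ ≤ b * (1 / ((n : ℝ) + 1) ^ 2) := by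
          rw [sq]
          gcongr
          linarith

end Stieltjes

section Kempner

variable {b : ℕ}

lemma irwinSum_zero_zero_eq_stieltjes (hb : 2 ≤ b) : irwinSum b 0 0 = stieltjes b 0 0 := by
  have value_injective : Function.Injective fun p : DigitFreeString b 0 => (p.2 : ℕ) := by
    rintro ⟨l, n, hn⟩ ⟨l', n', hn'⟩ (rfl : n = n')
    obtain rfl : l = l' := ((mem_digitFree_zero_iff_digits hb).1 hn).2.symm.trans
      ((mem_digitFree_zero_iff_digits hb).1 hn').2
    rfl
  rw [irwinSum, ← value_injective.tsum_eq]
  · refine tsum_congr fun p => ?_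
    have hcount := ((mem_digitFree_zero_iff_digits hb).1 p.2.2).1
    rw [weight_div_add_point (by omega)]
    rcases Nat.eq_zero_or_pos (p.2 : ℕ) with h0 | hpos
    · simp [h0]
    · simp [hpos, hcount]
  · intro m hm
    obtain ⟨-, hcount⟩ : 0 < m ∧ (b.digits m).count 0 = 0 := by
      by_contra h
      exact hm (if_neg h)
    exact ⟨⟨_, m, (mem_digitFree_zero_iff_digits hb).2 ⟨hcount, rfl⟩⟩, rfl⟩

-- At `n = 0` the junk value `1 / 0 = 0` leaves exactly `stieltjes b 0 0` on the right.
lemma sum_stieltjes_block_sub (hb : 0 < b) (n : ℕ) :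
    ∑ a ∈ range b, stieltjes b 0 (n * b + a : ℕ) - stieltjes b 0 n =
      stieltjes b 0 (n * b) - 1 / n := by
  rw [stieltjes_eq_one_div_add_sum hb n.cast_nonneg fun a ha => ?_,
    sum_erase_eq_sub (mem_range.2 hb)]
  · push_cast
    simp only [mul_comm (b : ℝ), add_zero]
    ring
  · have : 0 < a := Nat.pos_of_ne_zero (ne_of_mem_erase ha)
    positivity

lemma tendsto_sum_stieltjes_mul_sub (hb : 0 < b) :
    Tendsto (fun M : ℕ => ∑ n ∈ range M, (stieltjes b 0 (n * b) - 1 / n)) atTop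
      (𝓝 (b * Real.log b)) := by
  refine (tendsto_sum_range_mul_sub_sum_range (summable_stieltjes_natCast_sub hb) hb).congr
    fun M => ?_
  rw [sum_range_mul, ← sum_sub_distrib]
  exact sum_congr rfl fun n _ => sum_stieltjes_block_sub hb n

lemma stieltjes_zero_eq_of_hasSum (hb : 0 < b) {s : ℝ}
    (hs : HasSum (fun n : ℕ => 1 / ((n : ℝ) + 1) - stieltjes b 0 ((n + 1) * b)) s) :
    stieltjes b 0 0 = b * Real.log b + s := by
  have h := ((tendsto_add_atTop_iff_nat 1).2 (tendsto_sum_stieltjes_mul_sub hb)).add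
    hs.tendsto_sum_nat
  refine tendsto_nhds_unique (tendsto_const_nhds.congr fun M => ?_) h
  rw [sum_range_succ', add_right_comm, ← sum_add_distrib]
  simp

lemma summable_momentU_div_mul_pow (hb : 2 ≤ b) : Summable fun q : ℕ × ℕ =>
    (-1) ^ q.1 * momentU b 0 0 (q.1 + 1) / (((q.2 : ℝ) + 1) * b) ^ (q.1 + 2) := by
  refine summable_div_mul_pow (u := fun j => (-1) ^ j * momentU b 0 0 (j + 1)) (C := b)
    (fun j => ?_) (by exact_mod_cast hb)
  simpa [abs_mul] using abs_momentU_le (by omega : 0 < b) (j + 1)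

lemma hasSum_one_div_sub_stieltjes (hb : 2 ≤ b) (n : ℕ) :
    HasSum (fun j : ℕ => (-1) ^ j * momentU b 0 0 (j + 1) / (((n : ℝ) + 1) * b) ^ (j + 2))
      (1 / ((n : ℝ) + 1) - stieltjes b 0 ((n + 1) * b)) := by
  have hb' : (2 : ℝ) ≤ b := by exact_mod_cast hb
  have h := hasSum_div_sub_stieltjes (d := 0) (by omega : 0 < b)
    (by nlinarith [n.cast_nonneg (α := ℝ)] : 1 < ((n : ℝ) + 1) * b)
  rwa [div_mul_cancel_right₀ (by positivity), ← one_div] at h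

end Kempner

end KempnerSeries

/-- Exact convergent series (indexed so that `m ≥ 1` corresponds to `m = j + 1`):
`K(b,0) = b log b + ∑_{m≥1} (−1)^{m−1} ζ(m+1) u_{0;m}(b,0) / b^{m+1}`,
the series converging absolutely. -/
theorem kempner_zero_series (b : ℕ) (hb : 2 ≤ b) :
    Summable (fun j : ℕ =>
      |(-1 : ℝ) ^ j * zetaR (j + 2) * momentU b 0 0 (j + 1) / (b : ℝ) ^ (j + 2)|) ∧
    irwinSum b 0 0 = (b : ℝ) * Real.log b +
      ∑' j : ℕ, (-1 : ℝ) ^ j * zetaR (j + 2) * momentU b 0 0 (j + 1) / (b : ℝ) ^ (j + 2) := by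
  have double := KempnerSeries.summable_momentU_div_mul_pow hb
  have zeta_sum : HasSum (fun j : ℕ =>
      (-1 : ℝ) ^ j * zetaR (j + 2) * momentU b 0 0 (j + 1) / (b : ℝ) ^ (j + 2)) _ :=
    double.hasSum.prod_fiberwise fun j => by
      rw [mul_right_comm, mul_comm]
      exact KempnerSeries.hasSum_div_mul_pow _ _ (by omega)
  have stieltjes_sum := ((Equiv.prodComm ℕ ℕ).hasSum_iff.2 double.hasSum).prod_fiberwise
    (KempnerSeries.hasSum_one_div_sub_stieltjes hb)
  refine ⟨zeta_sum.summable.abs, ?_⟩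
  rw [KempnerSeries.irwinSum_zero_zero_eq_stieltjes hb, zeta_sum.tsum_eq]
  exact KempnerSeries.stieltjes_zero_eq_of_hasSum (by omega) stieltjes_sum
end
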